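/- arXiv:1512.03886 — 3 statements merged into one kernel-verified Lean document; each statement's English description precedes it below -/
import Mathlib

section
/- Let u be a classical solution of the graphical mean curvature flow with transport term f⃗ (of class C¹) and Neumann boundary condition, and let v := √(1+|du|²). Then on Ω×(0,T): ∂_t v − Δ_{Γ_t} v − ((du/v)·dv)(∂_t u/v) = −|A_t|² v − 2|D_{Γ_t} v|²/v + du·d(f⃗·n⃗), where d(f⃗·n⃗) denotes the gradient in x of the function x ↦ f⃗(x,u(x,t),t)·n⃗(x,t). -/
open MeasureTheory Metric Set Real Filter
open scoped RealInnerProductSpace ENNReal NNReal Topology ContDiff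

noncomputable section

abbrev Eucl (n : ℕ) := EuclideanSpace ℝ (Fin n)

variable {n : ℕ}

/-- spatial gradient of a time-dependent function -/
def sgrad (u : Eucl n → ℝ → ℝ) (x : Eucl n) (t : ℝ) : Eucl n :=
  gradient (fun y => u y t) x

/-- the area element `v = √(1+|du|²)` -/
def vel (u : Eucl n → ℝ → ℝ) (x : Eucl n) (t : ℝ) : ℝ :=
  Real.sqrt (1 + ‖sgrad u x t‖ ^ 2)

/-- divergence of a vector field on `ℝⁿ` -/
def divg (F : Eucl n → Eucl n) (x : Eucl n) : ℝ :=
  ∑ i, fderiv ℝ (fun y => F y i) x (EuclideanSpace.single i 1)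

/-- the upward unit normal `(−du,1)/v` of the graph, as a vector in `ℝ^{n+1}` -/
def unormal (u : Eucl n → ℝ → ℝ) (x : Eucl n) (t : ℝ) : Eucl (n + 1) :=
  (WithLp.equiv 2 (Fin (n + 1) → ℝ)).symm
    (Fin.snoc (fun i => -(sgrad u x t i) / vel u x t) (1 / vel u x t))

/-- the point `(x, u(x,t))` on the graph `Γ_t ⊆ ℝ^{n+1}` -/
def gpt (u : Eucl n → ℝ → ℝ) (x : Eucl n) (t : ℝ) : Eucl (n + 1) :=
  (WithLp.equiv 2 (Fin (n + 1) → ℝ)).symm (Fin.snoc (fun i => x i) (u x t))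

/-- `f⃗ · n⃗` evaluated at `(x, u(x,t), t)` -/
def fdotn (f : Eucl n → ℝ → ℝ → Eucl (n + 1)) (u : Eucl n → ℝ → ℝ)
    (x : Eucl n) (t : ℝ) : ℝ :=
  ⟪f x (u x t) t, unormal u x t⟫

/-- signed distance to `∂Ω` (negative inside `Ω`) -/
def sdist (Ω : Set (Eucl n)) (y : Eucl n) : ℝ := infDist y Ω - infDist y Ωᶜ

/-- the outward unit normal of `∂Ω`, as the gradient of the signed distance -/
def outNormal (Ω : Set (Eucl n)) (x : Eucl n) : Eucl n := gradient (sdist Ω) x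

/-- `∂Ω` is smooth: the signed distance is smooth near the boundary. -/
def SmoothBoundary (Ω : Set (Eucl n)) : Prop :=
  ∃ U : Set (Eucl n), IsOpen U ∧ frontier Ω ⊆ U ∧ ContDiffOn ℝ ∞ (sdist Ω) U

/-- classical solution of graphical MCF with transport term and Neumann condition -/
structure IsMCFSolution (Ω : Set (Eucl n)) (f : Eucl n → ℝ → ℝ → Eucl (n + 1))
    (u₀ : Eucl n → ℝ) (u : Eucl n → ℝ → ℝ) (T : ℝ) : Prop where
  reg_x : ∀ t ∈ Ioo (0 : ℝ) T, ContDiffOn ℝ 2 (fun x => u x t) Ω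
  reg_t : ∀ x ∈ Ω, ∀ t ∈ Ioo (0 : ℝ) T, DifferentiableAt ℝ (u x) t
  cont : ContinuousOn (fun p : Eucl n × ℝ => u p.1 p.2) (closure Ω ×ˢ Icc 0 T)
  grad_cont : ∀ t ∈ Ioo (0 : ℝ) T, ContinuousOn (fun x => sgrad u x t) (closure Ω)
  pde : ∀ x ∈ Ω, ∀ t ∈ Ioo (0 : ℝ) T,
    deriv (u x) t / vel u x t
      = divg (fun y => (vel u y t)⁻¹ • sgrad u y t) x + fdotn f u x t
  neumann : ∀ t ∈ Ioo (0 : ℝ) T, ∀ x ∈ frontier Ω, ⟪sgrad u x t, outNormal Ω x⟫ = 0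
  init : ∀ x ∈ closure Ω, u x 0 = u₀ x

/-- mixed norm `‖f⃗‖_{L^q_t L^p_x (a,b,Γ_t)}`, with the graph integral
`∫_{Γ_t} g dH^n = ∫_Ω g(x,u(x,t)) v dx`, as an extended real number -/
def mixedNormE (Ω : Set (Eucl n)) (f : Eucl n → ℝ → ℝ → Eucl (n + 1))
    (u : Eucl n → ℝ → ℝ) (p q a b : ℝ) : ℝ≥0∞ :=
  (∫⁻ t in Ioo a b,
      (∫⁻ x in Ω, (‖f x (u x t) t‖₊ : ℝ≥0∞) ^ p * ENNReal.ofReal (vel u x t)) ^ (q / p))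
    ^ (1 / q)


/-- partial derivative in the `i`-th coordinate direction -/
def pd {m : ℕ} (g : Eucl m → ℝ) (i : Fin m) (x : Eucl m) : ℝ :=
  fderiv ℝ g x (EuclideanSpace.single i 1)

/-- second partial derivative -/
def pd2 {m : ℕ} (g : Eucl m → ℝ) (i j : Fin m) (x : Eucl m) : ℝ :=
  pd (pd g j) i x

/-- inverse metric of the graph: `g^{ij} = δ_{ij} − ∂_iu ∂_ju / v²` -/
def gInv (u : Eucl n → ℝ → ℝ) (x : Eucl n) (t : ℝ) (i j : Fin n) : ℝ :=
  (if i = j then 1 else 0)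
    - pd (fun y => u y t) i x * pd (fun y => u y t) j x / (vel u x t) ^ 2

/-- the mean curvature scalar `h = −div(du/v)` -/
def meanH (u : Eucl n → ℝ → ℝ) (x : Eucl n) (t : ℝ) : ℝ :=
  -divg (fun y => (vel u y t)⁻¹ • sgrad u y t) x

/-- `|A_t|²`, the squared norm of the second fundamental form of the graph -/
def secondFF2 (u : Eucl n → ℝ → ℝ) (x : Eucl n) (t : ℝ) : ℝ :=
  ∑ i, ∑ j, ∑ k, ∑ l,
    gInv u x t i k * gInv u x t j l
      * (pd2 (fun y => u y t) i j x / vel u x t)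
      * (pd2 (fun y => u y t) k l x / vel u x t)

/-- Laplace–Beltrami operator of the graph:
`Δ_{Γ_t}φ = Σ g^{ij} ∂²_{ij}φ + h (du·dφ)/v` -/
def lapB (u : Eucl n → ℝ → ℝ) (φ : Eucl n → ℝ) (x : Eucl n) (t : ℝ) : ℝ :=
  (∑ i, ∑ j, gInv u x t i j * pd2 φ i j x)
    + meanH u x t * ⟪sgrad u x t, gradient φ x⟫ / vel u x t

/-- `|D_{Γ_t}φ|² = |dφ|² − (du·dφ)²/v²` -/
def tgradSq (u : Eucl n → ℝ → ℝ) (φ : Eucl n → ℝ) (x : Eucl n) (t : ℝ) : ℝ :=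
  ‖gradient φ x‖ ^ 2 - ⟪sgrad u x t, gradient φ x⟫ ^ 2 / (vel u x t) ^ 2


lemma gradient_apply_eq (φ : Eucl n → ℝ) (x : Eucl n) (i : Fin n) :
    gradient φ x i = pd φ i x := by
  have h : ⟪gradient φ x, EuclideanSpace.single i (1:ℝ)⟫ = pd φ i x := by
    simp [gradient, pd]
  rw [← h, EuclideanSpace.inner_single_right]
  simp

lemma inner_eq_sum (a b : Eucl n) : ⟪a, b⟫ = ∑ i, a i * b i := by
  simp [PiLp.inner_apply, mul_comm]

lemma norm_sq_eq_sum (a : Eucl n) : ‖a‖ ^ 2 = ∑ i, a i ^ 2 := by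
  simp [EuclideanSpace.norm_sq_eq]

lemma vel_eq (u : Eucl n → ℝ → ℝ) (x : Eucl n) (t : ℝ) :
    vel u x t = Real.sqrt (1 + ∑ i, pd (fun y => u y t) i x ^ 2) := by
  simp [vel, norm_sq_eq_sum, sgrad, gradient_apply_eq]

lemma vel_pos (u : Eucl n → ℝ → ℝ) (x : Eucl n) (t : ℝ) : 0 < vel u x t := by
  unfold vel; positivity

lemma vel_sq (u : Eucl n → ℝ → ℝ) (x : Eucl n) (t : ℝ) :
    vel u x t * vel u x t = 1 + ∑ i, pd (fun y => u y t) i x * pd (fun y => u y t) i x := by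
  rw [vel_eq, Real.mul_self_sqrt (by positivity)]
  simp [pow_two]

lemma pd_contDiffAt {g : Eucl n → ℝ} {x : Eucl n} (h : ContDiffAt ℝ ∞ g x) (i : Fin n) :
    ContDiffAt ℝ ∞ (pd g i) x := by
  unfold pd
  exact (h.fderiv_right (m := ∞) (by simp)).clm_apply contDiffAt_const

lemma dAt {E : Type*} [NormedAddCommGroup E] [NormedSpace ℝ E] {g : E → ℝ} {x : E}
    (h : ContDiffAt ℝ ∞ g x) : DifferentiableAt ℝ g x :=
  h.differentiableAt (by simp)

lemma pd_mul' {a b : Eucl n → ℝ} {x : Eucl n} (ha : DifferentiableAt ℝ a x)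
    (hb : DifferentiableAt ℝ b x) (i : Fin n) :
    pd (fun y => a y * b y) i x = pd a i x * b x + a x * pd b i x := by
  unfold pd
  rw [fderiv_fun_mul ha hb]
  simp; ring

lemma pd_add' {a b : Eucl n → ℝ} {x : Eucl n} (ha : DifferentiableAt ℝ a x)
    (hb : DifferentiableAt ℝ b x) (i : Fin n) :
    pd (fun y => a y + b y) i x = pd a i x + pd b i x := by
  unfold pd
  rw [fderiv_fun_add ha hb]
  simp

lemma pd_sum' {a : Fin n → Eucl n → ℝ} {x : Eucl n} (ha : ∀ k, DifferentiableAt ℝ (a k) x)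
    (i : Fin n) :
    pd (fun y => ∑ k, a k y) i x = ∑ k, pd (a k) i x := by
  unfold pd
  rw [fderiv_fun_sum (fun k _ => ha k)]
  simp

lemma pd_const' (c : ℝ) (x : Eucl n) (i : Fin n) : pd (fun _ => c) i x = 0 := by
  simp [pd]

lemma pd_congr' {a b : Eucl n → ℝ} {x : Eucl n} (h : a =ᶠ[𝓝 x] b) (i : Fin n) :
    pd a i x = pd b i x := by
  unfold pd; rw [h.fderiv_eq]

lemma fderiv_symm' {E : Type*} [NormedAddCommGroup E] [NormedSpace ℝ E] {g : E → ℝ} {x : E}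
    (h : ContDiffAt ℝ ∞ g x) (a b : E) :
    fderiv ℝ (fun y => fderiv ℝ g y a) x b = fderiv ℝ (fun y => fderiv ℝ g y b) x a := by
  have hd : DifferentiableAt ℝ (fderiv ℝ g) x :=
    (h.fderiv_right (m := ∞) (by simp)).differentiableAt (by simp)
  have hs : IsSymmSndFDerivAt ℝ g x := h.isSymmSndFDerivAt (by
    rw [minSmoothness_of_isRCLikeNormedField]
    exact WithTop.coe_le_coe.2 (le_top : (2 : ℕ∞) ≤ ⊤))
  rw [fderiv_clm_apply hd (differentiableAt_const _), fderiv_clm_apply hd (differentiableAt_const _)]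
  simp
  exact hs b a

lemma pd2_symm {g : Eucl n → ℝ} {x : Eucl n} (h : ContDiffAt ℝ ∞ g x) (i j : Fin n) :
    pd2 g i j x = pd2 g j i x := fderiv_symm' h _ _

lemma vel_contDiffAt {u : Eucl n → ℝ → ℝ} {x : Eucl n} {t : ℝ}
    (h : ContDiffAt ℝ ∞ (fun y => u y t) x) : ContDiffAt ℝ ∞ (fun y => vel u y t) x := by
  have : (fun y => vel u y t) = fun y => Real.sqrt (1 + ∑ i, pd (fun y => u y t) i y ^ 2) := by
    funext y; exact vel_eq u y t
  rw [this]
  refine ContDiffAt.sqrt ?_ ?_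
  · exact contDiffAt_const.add (ContDiffAt.sum fun i _ => (pd_contDiffAt h i).pow 2)
  · positivity

lemma vel_pd {u : Eucl n → ℝ → ℝ} {x : Eucl n} {t : ℝ}
    (h : ContDiffAt ℝ ∞ (fun y => u y t) x) (i : Fin n) :
    vel u x t * pd (fun y => vel u y t) i x
      = ∑ k, pd2 (fun y => u y t) i k x * pd (fun y => u y t) k x := by
  have hv := dAt (vel_contDiffAt h)
  have hp := fun k => dAt (pd_contDiffAt h k)
  have e := pd_congr' (x := x) (Eventually.of_forall fun y => vel_sq u y t) i
  rw [pd_mul' hv hv, pd_add' (by fun_prop) (by fun_prop), pd_const',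
    pd_sum' (fun k => (hp k).fun_mul (hp k))] at e
  simp_rw [fun k => pd_mul' (hp k) (hp k) i] at e
  have e2 : ∑ k, (pd (pd (fun y => u y t) k) i x * pd (fun y => u y t) k x
      + pd (fun y => u y t) k x * pd (pd (fun y => u y t) k) i x)
      = 2 * ∑ k, pd2 (fun y => u y t) i k x * pd (fun y => u y t) k x := by
    rw [Finset.mul_sum]
    refine Finset.sum_congr rfl fun k _ => ?_
    unfold pd2; ring
  rw [e2] at e
  linarith

lemma vel_pd2 {u : Eucl n → ℝ → ℝ} {x : Eucl n} {t : ℝ}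
    (h : ∀ᶠ y in 𝓝 x, ContDiffAt ℝ ∞ (fun y => u y t) y) (i j : Fin n) :
    pd (fun y => vel u y t) i x * pd (fun y => vel u y t) j x
        + vel u x t * pd2 (fun y => vel u y t) i j x
      = ∑ k, (pd (pd2 (fun y => u y t) j k) i x * pd (fun y => u y t) k x
          + pd2 (fun y => u y t) j k x * pd2 (fun y => u y t) i k x) := by
  have h0 := h.self_of_nhds
  have hv := vel_contDiffAt h0
  have hp := fun k => pd_contDiffAt h0 k
  have hp2 : ∀ k, ContDiffAt ℝ ∞ (pd2 (fun y => u y t) j k) x := fun k => pd_contDiffAt (hp k) j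
  have e := pd_congr' (x := x) (h.mono fun y hy => vel_pd hy j) i
  rw [pd_mul' (dAt hv) (dAt (pd_contDiffAt hv j)),
    pd_sum' (fun k => (dAt (hp2 k)).fun_mul (dAt (hp k)))] at e
  simp_rw [fun k => pd_mul' (dAt (hp2 k)) (dAt (hp k)) i] at e
  exact e

/-- The curvature `div (du/v)` in coordinates. -/
def curvK (u : Eucl n → ℝ → ℝ) (t : ℝ) (x : Eucl n) : ℝ :=
  divg (fun y => (vel u y t)⁻¹ • sgrad u y t) x

lemma curvK_eq (u : Eucl n → ℝ → ℝ) (t : ℝ) :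
    curvK u t = fun x => ∑ i, pd (fun y => (vel u y t)⁻¹ * pd (fun y => u y t) i y) i x := by
  funext x
  simp only [curvK, divg, sgrad, PiLp.smul_apply, smul_eq_mul, gradient_apply_eq]
  rfl

lemma vinv_contDiffAt {u : Eucl n → ℝ → ℝ} {x : Eucl n} {t : ℝ}
    (h : ContDiffAt ℝ ∞ (fun y => u y t) x) : ContDiffAt ℝ ∞ (fun y => (vel u y t)⁻¹) x :=
  (vel_contDiffAt h).inv (vel_pos u x t).ne'

lemma curvK_contDiffAt {u : Eucl n → ℝ → ℝ} {x : Eucl n} {t : ℝ}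
    (h : ContDiffAt ℝ ∞ (fun y => u y t) x) : ContDiffAt ℝ ∞ (curvK u t) x := by
  rw [curvK_eq]
  exact ContDiffAt.sum fun i _ => pd_contDiffAt ((vinv_contDiffAt h).mul (pd_contDiffAt h i)) i

lemma curvK_rel {u : Eucl n → ℝ → ℝ} {x : Eucl n} {t : ℝ}
    (h : ContDiffAt ℝ ∞ (fun y => u y t) x) :
    vel u x t * vel u x t * curvK u t x
        + ∑ i, pd (fun y => vel u y t) i x * pd (fun y => u y t) i x
      = vel u x t * ∑ i, pd2 (fun y => u y t) i i x := by
  rw [curvK_eq]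
  simp only [Finset.mul_sum]
  rw [← Finset.sum_add_distrib]
  refine Finset.sum_congr rfl fun i _ => ?_
  have hq := (vinv_contDiffAt h).mul (pd_contDiffAt h i)
  have e := pd_congr' (x := x) (a := fun y => vel u y t * ((vel u y t)⁻¹ * pd (fun y => u y t) i y))
    (b := pd (fun y => u y t) i) (Eventually.of_forall fun y => by
      have := (vel_pos u y t).ne'
      field_simp) i
  rw [pd_mul' (dAt (vel_contDiffAt h)) (dAt hq)] at e
  unfold pd2
  rw [← e]
  have := (vel_pos u x t).ne'
  field_simp
  ring

lemma curvK_pd {u : Eucl n → ℝ → ℝ} {x : Eucl n} {t : ℝ}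
    (h : ∀ᶠ y in 𝓝 x, ContDiffAt ℝ ∞ (fun y => u y t) y) (k : Fin n) :
    2 * vel u x t * pd (fun y => vel u y t) k x * curvK u t x
        + vel u x t * vel u x t * pd (curvK u t) k x
        + ∑ i, (pd2 (fun y => vel u y t) k i x * pd (fun y => u y t) i x
            + pd (fun y => vel u y t) i x * pd2 (fun y => u y t) k i x)
      = pd (fun y => vel u y t) k x * (∑ i, pd2 (fun y => u y t) i i x)
        + vel u x t * ∑ i, pd (pd2 (fun y => u y t) i i) k x := by
  have h0 := h.self_of_nhds
  have hv := vel_contDiffAt h0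
  have hK := curvK_contDiffAt h0
  have hp := fun k => pd_contDiffAt h0 k
  have hvp := fun k => pd_contDiffAt hv k
  have hp2 : ∀ k, ContDiffAt ℝ ∞ (pd2 (fun y => u y t) k k) x := fun k => pd_contDiffAt (hp k) k
  have e := pd_congr' (x := x) (h.mono fun y hy => curvK_rel hy) k
  rw [pd_add' (dAt ((hv.mul hv).mul hK)) (dAt (ContDiffAt.sum fun i _ => (hvp i).mul (hp i))),
    pd_mul' (dAt (hv.mul hv)) (dAt hK), pd_mul' (dAt hv) (dAt hv),
    pd_sum' (fun i => dAt ((hvp i).mul (hp i))),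
    pd_mul' (dAt hv) (dAt (ContDiffAt.sum fun i _ => hp2 i)), pd_sum' (fun i => dAt (hp2 i))] at e
  simp_rw [fun i => pd_mul' (dAt (hvp i)) (dAt (hp i)) k] at e
  unfold pd2 at e ⊢
  rw [← e]; ring

lemma mixed_time {u : Eucl n → ℝ → ℝ} {x : Eucl n} {t : ℝ}
    (h : ∀ᶠ P in 𝓝 (x, t), ContDiffAt ℝ ∞ (fun P : Eucl n × ℝ => u P.1 P.2) P) (k : Fin n) :
    HasDerivAt (fun r => pd (fun y => u y r) k x) (pd (fun y => deriv (u y) t) k x) t := by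
  set U := fun P : Eucl n × ℝ => u P.1 P.2 with hU
  have h0 := h.self_of_nhds
  have ex : ∀ᶠ y in 𝓝 x, ContDiffAt ℝ ∞ U (y, t) :=
    (Continuous.prodMk_left t).continuousAt.eventually h
  have et : ∀ᶠ r in 𝓝 t, ContDiffAt ℝ ∞ U (x, r) :=
    (Continuous.prodMk_right x).continuousAt.eventually h
  have e1 : (fun r => pd (fun y => u y r) k x) =ᶠ[𝓝 t]
      fun r => fderiv ℝ U (x, r) (EuclideanSpace.single k 1, 0) := by
    filter_upwards [et] with r hr
    have h1 : HasFDerivAt (fun e : Eucl n => (e, r)) (ContinuousLinearMap.inl ℝ (Eucl n) ℝ) x :=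
      hasFDerivAt_prodMk_left x r
    have := HasFDerivAt.comp x (dAt hr).hasFDerivAt h1
    unfold pd
    have h2 : HasFDerivAt (fun y => u y r) _ x := this
    rw [h2.fderiv]; simp
  have e2 : (fun y => deriv (u y) t) =ᶠ[𝓝 x] fun y => fderiv ℝ U (y, t) (0, 1) := by
    filter_upwards [ex] with y hy
    have := (dAt hy).hasFDerivAt.comp t (hasFDerivAt_prodMk_right y t)
    have h2 : HasFDerivAt (u y) _ t := this
    rw [← fderiv_apply_one_eq_deriv, h2.fderiv]; simp
  have hfd : ∀ w, DifferentiableAt ℝ (fun P => fderiv ℝ U P w) (x, t) := fun w =>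
    dAt ((h0.fderiv_right (m := ∞) (by simp)).clm_apply contDiffAt_const)
  rw [pd_congr' e2]
  refine HasDerivAt.congr_of_eventuallyEq ?_ e1
  have a1 := (hfd (EuclideanSpace.single k 1, 0)).hasFDerivAt.comp t (hasFDerivAt_prodMk_right x t)
  have h1 : HasFDerivAt (fun e : Eucl n => (e, t)) (ContinuousLinearMap.inl ℝ (Eucl n) ℝ) x :=
    hasFDerivAt_prodMk_left x t
  have a2' := HasFDerivAt.comp x (hfd (0, 1)).hasFDerivAt h1
  have a2 : HasFDerivAt (fun y => fderiv ℝ U (y, t) (0, 1)) _ x := a2'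
  have a3 : HasDerivAt (fun r => fderiv ℝ U (x, r) (EuclideanSpace.single k 1, 0)) _ t :=
    a1.hasDerivAt
  refine a3.congr_deriv ?_
  symm
  unfold pd
  rw [a2.fderiv]
  simpa using fderiv_symm' h0 (0, 1) (EuclideanSpace.single k 1, 0)

lemma vel_time {u : Eucl n → ℝ → ℝ} {x : Eucl n} {t : ℝ}
    (h : ∀ᶠ P in 𝓝 (x, t), ContDiffAt ℝ ∞ (fun P : Eucl n × ℝ => u P.1 P.2) P) :
    vel u x t * deriv (fun r => vel u x r) t
      = ∑ k, pd (fun y => u y t) k x * pd (fun y => deriv (u y) t) k x := by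
  have hs : HasDerivAt (fun r => 1 + ∑ i, pd (fun y => u y r) i x ^ 2) _ t :=
    (HasDerivAt.fun_sum (u := Finset.univ) fun i _ => (mixed_time h i).pow 2).const_add 1
  have hv := hs.sqrt (by positivity)
  have e : (fun r => vel u x r) = fun r => Real.sqrt (1 + ∑ i, pd (fun y => u y r) i x ^ 2) := by
    funext r; exact vel_eq u x r
  rw [e, hv.deriv, ← vel_eq]
  have := (vel_pos u x t).ne'
  field_simp
  rw [Finset.mul_sum]
  refine Finset.sum_congr rfl fun k _ => ?_
  push_cast
  ring

lemma gsum (p : Fin n → ℝ) (c : ℝ) (i : Fin n) (b : Fin n → ℝ) :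
    ∑ k, ((if i = k then 1 else 0) - p i * p k / c) * b k = b i - p i / c * ∑ k, p k * b k := by
  simp only [sub_mul, Finset.sum_sub_distrib, ite_mul, one_mul, zero_mul, Finset.sum_ite_eq,
    Finset.mem_univ, if_true, Finset.mul_sum]
  congr 1
  refine Finset.sum_congr rfl fun k _ => by ring

lemma sff_alg (p : Fin n → ℝ) (a : Fin n → Fin n → ℝ) (ha : ∀ i j, a i j = a j i)
    (w : Fin n → ℝ) (v : ℝ) (hv : v ≠ 0) (hw : ∀ i, v * w i = ∑ k, a i k * p k) :
    ∑ i, ∑ j, ∑ k, ∑ l, ((if i = k then 1 else 0) - p i * p k / v ^ 2)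
        * ((if j = l then 1 else 0) - p j * p l / v ^ 2) * (a i j / v) * (a k l / v)
      = ((∑ i, ∑ j, a i j ^ 2) - 2 * (∑ i, w i ^ 2) + (∑ i, p i * w i) ^ 2 / v ^ 2) / v ^ 2 := by
  have s1 : ∀ i j k, ∑ l, ((if i = k then 1 else 0) - p i * p k / v ^ 2)
        * ((if j = l then 1 else 0) - p j * p l / v ^ 2) * (a i j / v) * (a k l / v)
      = ((if i = k then 1 else 0) - p i * p k / v ^ 2) *
        ((a i j / v ^ 2) * (a k j - p j / v * w k)) := by
    intro i j k
    have := gsum p (v ^ 2) j (fun l => a k l)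
    have e : ∑ l, p l * a k l = v * w k := by
      rw [hw]; exact Finset.sum_congr rfl fun _ _ => mul_comm _ _
    rw [e] at this
    have e3 : a k j - p j / v * w k = a k j - p j / v ^ 2 * (v * w k) := by field_simp
    rw [e3, ← this, Finset.mul_sum, Finset.mul_sum]
    refine Finset.sum_congr rfl fun l _ => ?_
    field_simp
  simp_rw [s1, gsum]
  have s2 : ∀ i j, ∑ k, p k * (a i j / v ^ 2 * (a k j - p j / v * w k))
      = a i j / v ^ 2 * (v * w j - p j / v * ∑ k, p k * w k) := by
    intro i j
    rw [hw, Finset.mul_sum, ← Finset.sum_sub_distrib, Finset.mul_sum]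
    refine Finset.sum_congr rfl fun k _ => ?_
    rw [ha j k]; ring
  simp_rw [s2]
  set S := ∑ k, p k * w k with hS
  have s3 : ∀ i, ∑ j, (a i j / v ^ 2 * (a i j - p j / v * w i)
        - p i / v ^ 2 * (a i j / v ^ 2 * (v * w j - p j / v * S)))
      = (∑ j, a i j ^ 2) / v ^ 2 - w i ^ 2 / v ^ 2
        - (∑ j, p i * a i j * w j) / v ^ 3 + p i * w i * S / v ^ 4 := by
    intro i
    have e1 : ∑ j, (a i j / v ^ 2 * (a i j - p j / v * w i)
        - p i / v ^ 2 * (a i j / v ^ 2 * (v * w j - p j / v * S)))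
      = (∑ j, a i j ^ 2) / v ^ 2 - w i / v ^ 3 * (∑ j, a i j * p j)
        - (∑ j, p i * a i j * w j) / v ^ 3 + p i * S / v ^ 5 * ∑ j, a i j * p j := by
      simp only [Finset.mul_sum, Finset.sum_div]
      rw [← Finset.sum_sub_distrib, ← Finset.sum_sub_distrib, ← Finset.sum_add_distrib]
      refine Finset.sum_congr rfl fun j _ => ?_
      field_simp
      ring
    rw [e1, ← hw]
    field_simp
  simp_rw [s3]
  rw [Finset.sum_add_distrib, Finset.sum_sub_distrib, Finset.sum_sub_distrib]
  have s4 : ∑ i, ∑ j, p i * a i j * w j = v * ∑ j, w j ^ 2 := by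
    rw [Finset.sum_comm, Finset.mul_sum]
    refine Finset.sum_congr rfl fun j _ => ?_
    have : v * w j ^ 2 = (v * w j) * w j := by ring
    rw [this, hw, Finset.sum_mul]
    refine Finset.sum_congr rfl fun i _ => ?_
    rw [ha i j]; ring
  simp only [← Finset.sum_div]
  rw [s4, ← Finset.sum_mul, ← hS]
  field_simp
  ring


lemma final_alg (v K F vt : ℝ) (p w dK dF : Fin n → ℝ) (H V R : Fin n → Fin n → ℝ)
    (hv : v ≠ 0) (hsym : ∀ i j, H i j = H j i)
    (f1 : ∀ i, v * w i = ∑ k, H i k * p k)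
    (f2 : v * v * K + ∑ i, w i * p i = v * ∑ i, H i i)
    (f3 : ∀ k, 2 * v * w k * K + v * v * dK k + ∑ i, (V k i * p i + w i * H k i)
      = w k * (∑ i, H i i) + v * ∑ i, R i k)
    (f4 : ∀ i, w i * w i + v * V i i = ∑ k, (R i k * p k + H i k * H i k))
    (hvt : v * vt = ∑ k, p k * (w k * (K + F) + v * (dK k + dF k))) :
    vt - (∑ i, (V i i - p i / v ^ 2 * ∑ k, p k * V i k) + -K * (∑ i, p i * w i) / v)
        - (starRingEnd ℝ) v⁻¹ * (∑ i, p i * w i) * (v * (K + F) / v)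
      = -(((∑ i, ∑ j, H i j ^ 2) - 2 * (∑ i, w i ^ 2) + (∑ i, p i * w i) ^ 2 / v ^ 2) / v ^ 2) * v
        - 2 * (∑ i, w i ^ 2 - (∑ i, p i * w i) ^ 2 / v ^ 2) / v + ∑ i, p i * dF i := by
  have g1 : v * vt = (∑ i, p i * w i) * (K + F) + v * (∑ i, p i * dK i + ∑ i, p i * dF i) := by
    rw [hvt, Finset.sum_mul, ← Finset.sum_add_distrib, Finset.mul_sum, ← Finset.sum_add_distrib]
    exact Finset.sum_congr rfl fun _ _ => by ring
  have g2 : ∑ i, w i * p i = ∑ i, p i * w i := Finset.sum_congr rfl fun _ _ => mul_comm _ _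
  have g3 : ∑ i, w i ^ 2 + v * ∑ i, V i i
      = ∑ k, p k * (∑ i, R i k) + ∑ i, ∑ j, H i j ^ 2 := by
    have : ∑ k, p k * (∑ i, R i k) = ∑ i, ∑ k, R i k * p k := by
      rw [Finset.sum_comm]
      exact Finset.sum_congr rfl fun k _ => by rw [mul_comm, Finset.sum_mul]
    rw [this, Finset.mul_sum, ← Finset.sum_add_distrib, ← Finset.sum_add_distrib]
    refine Finset.sum_congr rfl fun i _ => ?_
    rw [← Finset.sum_add_distrib]
    have := f4 i
    rw [pow_two, this]
    exact Finset.sum_congr rfl fun k _ => by ring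
  have g4 : 2 * v * K * (∑ i, p i * w i) + v * v * (∑ i, p i * dK i)
      + ((∑ i, p i * ∑ k, p k * V i k) + v * ∑ i, w i ^ 2)
      = (∑ i, p i * w i) * (∑ i, H i i) + v * ∑ k, p k * (∑ i, R i k) := by
    have a : (∑ i, p i * ∑ k, p k * V i k) + v * ∑ i, w i ^ 2
        = ∑ k, p k * ∑ i, (V k i * p i + w i * H k i) := by
      simp only [Finset.sum_add_distrib, mul_add]
      congr 1
      · refine Finset.sum_congr rfl fun i _ => ?_
        congr 1
        exact Finset.sum_congr rfl fun k _ => mul_comm _ _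
      · simp only [Finset.mul_sum]
        rw [Finset.sum_comm]
        refine Finset.sum_congr rfl fun j _ => ?_
        have : v * w j ^ 2 = (v * w j) * w j := by ring
        rw [this, f1, Finset.sum_mul]
        refine Finset.sum_congr rfl fun i _ => ?_
        rw [hsym i j]; ring
    rw [a, Finset.mul_sum, Finset.mul_sum, Finset.mul_sum _ _ v, Finset.sum_mul,
      ← Finset.sum_add_distrib, ← Finset.sum_add_distrib, ← Finset.sum_add_distrib]
    refine Finset.sum_congr rfl fun k _ => ?_
    linear_combination p k * f3 k
  have g5 : ∑ i, (V i i - p i / v ^ 2 * ∑ k, p k * V i k)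
      = ∑ i, V i i - (∑ i, p i * ∑ k, p k * V i k) / v ^ 2 := by
    rw [Finset.sum_sub_distrib, Finset.sum_div]
    congr 1
    exact Finset.sum_congr rfl fun _ _ => by ring
  rw [g5]
  rw [g2] at f2
  clear g5 g2 f1 f3 f4 hvt
  generalize (∑ i, p i * w i) = S at *
  generalize (∑ i, w i ^ 2) = Q at *
  generalize (∑ i, p i * dK i) = PK at *
  generalize (∑ i, p i * dF i) = PF at *
  generalize (∑ i, p i * ∑ k, p k * V i k) = W at *
  generalize (∑ k, p k * (∑ i, R i k)) = P3 at *
  generalize (∑ i, H i i) = D at *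
  generalize (∑ i, V i i) = L at *
  generalize (∑ i, ∑ j, H i j ^ 2) = HH at *
  simp only [conj_trivial]
  have e1 : vt = (S * (K + F) + v * (PK + PF)) / v := by rw [← g1]; field_simp
  have e3 : L = (P3 + HH - Q) / v := by rw [eq_div_iff hv]; linarith
  have e4 : PK = (S * D + v * P3 - 2 * v * K * S - W - v * Q) / v ^ 2 := by
    rw [eq_div_iff (pow_ne_zero 2 hv)]; linarith
  have e2 : D = (v * v * K + S) / v := by rw [f2]; field_simp
  subst e2
  subst e4
  subst e3
  subst e1
  field_simp
  ring

/-- Lemma 3.2: evolution equation of the volume element `v`. -/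
theorem evolution_of_volume_element
    (n : ℕ) (T : ℝ) (hT : 0 < T)
    (Ω : Set (Eucl n)) (hΩopen : IsOpen Ω)
    (f : Eucl n → ℝ → ℝ → Eucl (n + 1))
    (hf : ContDiff ℝ 1 (fun P : Eucl n × ℝ × ℝ => f P.1 P.2.1 P.2.2))
    (u₀ : Eucl n → ℝ) (u : Eucl n → ℝ → ℝ)
    (hsol : IsMCFSolution Ω f u₀ u T)
    (hreg : ContDiffOn ℝ ∞ (fun P : Eucl n × ℝ => u P.1 P.2) (Ω ×ˢ Ioo 0 T)) :
    ∀ x ∈ Ω, ∀ t ∈ Ioo (0 : ℝ) T,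
      deriv (fun r => vel u x r) t
          - lapB u (fun y => vel u y t) x t
          - ⟪(vel u x t)⁻¹ • sgrad u x t, gradient (fun y => vel u y t) x⟫
              * (deriv (u x) t / vel u x t)
        = -(secondFF2 u x t) * vel u x t
            - 2 * tgradSq u (fun y => vel u y t) x t / vel u x t
            + ⟪sgrad u x t, gradient (fun y => fdotn f u y t) x⟫ := by
  intro x hx t ht
  have hopen : IsOpen (Ω ×ˢ Ioo 0 T) := hΩopen.prod isOpen_Ioo
  have hP : ∀ P ∈ Ω ×ˢ Ioo 0 T, ContDiffAt ℝ ∞ (fun P : Eucl n × ℝ => u P.1 P.2) P :=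
    fun P hP => hreg.contDiffAt (hopen.mem_nhds hP)
  have hPe : ∀ᶠ P in 𝓝 (x, t), ContDiffAt ℝ ∞ (fun P : Eucl n × ℝ => u P.1 P.2) P := by
    filter_upwards [hopen.mem_nhds (show (x, t) ∈ Ω ×ˢ Ioo 0 T from ⟨hx, ht⟩)] with P hP'
      using hP P hP'
  have hxe : ∀ᶠ y in 𝓝 x, y ∈ Ω := hΩopen.mem_nhds hx
  have hg : ∀ y ∈ Ω, ContDiffAt ℝ ∞ (fun y => u y t) y := fun y hy =>
    ContDiffAt.comp y (f := fun y => (y, t)) (hP (y, t) ⟨hy, ht⟩)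
      (contDiffAt_id.prodMk contDiffAt_const)
  have hge : ∀ᶠ y in 𝓝 x, ContDiffAt ℝ ∞ (fun y => u y t) y := hxe.mono hg
  have hg0 := hg x hx
  -- time derivative is smooth in space
  have hut : ContDiffAt ℝ ∞ (fun y => deriv (u y) t) x := by
    have e2 : (fun y => deriv (u y) t) =ᶠ[𝓝 x]
        fun y => fderiv ℝ (fun P : Eucl n × ℝ => u P.1 P.2) (y, t) (0, 1) := by
      filter_upwards [hxe] with y hy
      have h2 : HasFDerivAt (u y) _ t :=
        (dAt (hP (y, t) ⟨hy, ht⟩)).hasFDerivAt.comp t (hasFDerivAt_prodMk_right y t)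
      rw [← fderiv_apply_one_eq_deriv, h2.fderiv]; simp
    refine ContDiffAt.congr_of_eventuallyEq ?_ e2
    have h3 : ContDiffAt ℝ ∞ (fun P => fderiv ℝ (fun P : Eucl n × ℝ => u P.1 P.2) P (0, 1))
        (x, t) := ((hP (x, t) ⟨hx, ht⟩).fderiv_right (m := ∞) (by simp)).clm_apply contDiffAt_const
    exact ContDiffAt.comp x (f := fun y => (y, t)) h3 (contDiffAt_id.prodMk contDiffAt_const)
  have hv := vel_contDiffAt hg0
  have hK := curvK_contDiffAt hg0
  have hF : ContDiffAt ℝ ∞ (fun y => fdotn f u y t) x := by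
    have e : (fun y => fdotn f u y t) =ᶠ[𝓝 x]
        fun y => deriv (u y) t * (vel u y t)⁻¹ - curvK u t y := by
      filter_upwards [hxe] with y hy
      have := hsol.pde y hy t ht
      rw [div_eq_mul_inv] at this
      rw [this, curvK]; ring
    exact ((hut.mul (vinv_contDiffAt hg0)).sub hK).congr_of_eventuallyEq e
  have hpde : ∀ y ∈ Ω, deriv (u y) t = vel u y t * (curvK u t y + fdotn f u y t) := by
    intro y hy
    have := hsol.pde y hy t ht
    rw [div_eq_iff (vel_pos u y t).ne'] at this
    rw [this, curvK]; ring
  have hutk : ∀ k, pd (fun y => deriv (u y) t) k x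
      = pd (fun y => vel u y t) k x * (curvK u t x + fdotn f u x t)
        + vel u x t * (pd (curvK u t) k x + pd (fun y => fdotn f u y t) k x) := by
    intro k
    rw [pd_congr' (hxe.mono hpde) k, pd_mul' (dAt hv) (dAt (hK.add hF)),
      pd_add' (dAt hK) (dAt hF)]
  have hvt := vel_time hPe
  simp_rw [hutk] at hvt
  have f1 := vel_pd hg0
  have f2 := curvK_rel hg0
  have f3 := curvK_pd hge
  have f4 := fun i => vel_pd2 hge i i
  have hsym := pd2_symm hg0
  have hsym3 : ∀ i k, pd (pd2 (fun y => u y t) i i) k x = pd (pd2 (fun y => u y t) i k) i x := by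
    intro i k
    have a : pd (pd2 (fun y => u y t) i i) k x = pd (pd2 (fun y => u y t) k i) i x :=
      pd2_symm (pd_contDiffAt hg0 i) k i
    rw [a]
    exact pd_congr' (hge.mono fun y hy => pd2_symm hy k i) i
  simp_rw [hsym3] at f3
  have hA : secondFF2 u x t = _ := sff_alg (fun i => pd (fun y => u y t) i x)
    (fun i j => pd2 (fun y => u y t) i j x) hsym (fun i => pd (fun y => vel u y t) i x)
    (vel u x t) (vel_pos u x t).ne' f1
  have hvp := (vel_pos u x t).ne'
  have hpdedef := hpde x hx
  rw [hA]
  unfold lapB tgradSq meanH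
  have hKd : divg (fun y => (vel u y t)⁻¹ • sgrad u y t) x = curvK u t x := rfl
  rw [hKd, hpdedef, inner_smul_left]
  simp only [inner_eq_sum, norm_sq_eq_sum, sgrad, gradient_apply_eq, gInv]
  clear hKd hpdedef hA hF hK hv hut hpde hutk hge hg0 hg hPe hP
  generalize vel u x t = v at *
  generalize curvK u t x = K at *
  generalize fdotn f u x t = F at *
  generalize hpp : (fun i => pd (fun y => u y t) i x) = p at *
  generalize hww : (fun i => pd (fun y => vel u y t) i x) = w at *
  generalize hHH : (fun i j => pd2 (fun y => u y t) i j x) = H at *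
  generalize hVV : (fun i j => pd2 (fun y => vel u y t) i j x) = V at *
  generalize hTT : (fun i k => pd (pd2 (fun y => u y t) i k) i x) = R at *
  generalize hKK : (fun k => pd (curvK u t) k x) = dK at *
  generalize hFF : (fun k => pd (fun y => fdotn f u y t) k x) = dF at *
  replace hpp := fun i => congrFun hpp i
  replace hww := fun i => congrFun hww i
  replace hHH := fun i j => congrFun (congrFun hHH i) j
  replace hVV := fun i j => congrFun (congrFun hVV i) j
  replace hTT := fun i j => congrFun (congrFun hTT i) j
  replace hKK := fun i => congrFun hKK i
  replace hFF := fun i => congrFun hFF i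
  simp only [hpp, hww, hHH, hVV, hTT, hKK, hFF] at *
  generalize deriv (fun r => vel u x r) t = vt at *
  simp only [gsum]
  exact final_alg v K F vt p w dK dF H V R hvp hsym f1 f2 f3 f4 hvt

end
end

section
/- Let Ω ⊆ ℝⁿ be a bounded open set with smooth boundary, T > 0, let f⃗ : Ω×ℝ×[0,T] → ℝ^{n+1} be bounded and continuous, and let u ∈ C^{2,1}(Q_T) ∩ C(Q̄_T) be a classical solution of the graphical mean curvature flow with transport term f⃗ and Neumann boundary condition, with initial data u₀. Then sup_{Q_T} |u| ≤ ( sup_{Ω×ℝ×[0,T]} |f⃗| ) · T + sup_Ω |u₀|. -/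
open MeasureTheory Metric Set Real Filter
open scoped RealInnerProductSpace ENNReal NNReal Topology ContDiff

noncomputable section

variable {n : ℕ}

lemma gradient_coord (g : Eucl n → ℝ) (x : Eucl n) (i : Fin n) :
    gradient g x i = fderiv ℝ g x (EuclideanSpace.single i 1) := by
  rw [← inner_gradient_left, EuclideanSpace.inner_single_right]
  simp

lemma contDiffAt_gradient {m k : WithTop ℕ∞} (g : Eucl n → ℝ) (x : Eucl n) (hg : ContDiffAt ℝ m g x)
    (hk : k + 1 ≤ m) : ContDiffAt ℝ k (gradient g) x := by
  rw [contDiffAt_euclidean]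
  intro i
  simp only [gradient_coord]
  exact (hg.fderiv_right hk).clm_apply contDiffAt_const

lemma second_deriv_test (w : Eucl n → ℝ) (x : Eucl n) (hw : ContDiffAt ℝ 2 w x)
    (hmax : IsLocalMax w x) (A : Eucl n →L[ℝ] Eucl n) (hA : HasFDerivAt (gradient w) A x)
    (d : Eucl n) : ⟪A d, d⟫ ≤ 0 := by
  by_contra! hpos
  set γ : ℝ → Eucl n := fun s => x + s • d with hγ
  have hγ0 : γ 0 = x := by simp [hγ]
  have hγd : ∀ s, HasDerivAt γ d s := by
    intro s
    have := ((hasDerivAt_id s).smul_const d).const_add x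
    rw [one_smul] at this
    exact this
  have hγc : ContinuousAt γ 0 := (hγd 0).continuousAt
  have hdiff : ∀ᶠ y in 𝓝 x, DifferentiableAt ℝ w y := by
    have := hw.eventually (by simp)
    filter_upwards [this] with y hy
    exact hy.differentiableAt (by simp)
  have hev : ∀ᶠ s in 𝓝 (0:ℝ), HasDerivAt (w ∘ γ) ⟪gradient w (γ s), d⟫ s := by
    have : Tendsto γ (𝓝 0) (𝓝 x) := by simpa [hγ0] using hγc.tendsto
    filter_upwards [this.eventually hdiff] with s hs
    rw [inner_gradient_left]
    exact hs.hasFDerivAt.comp_hasDerivAt s (hγd s)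
  have hd1 : deriv (w ∘ γ) =ᶠ[𝓝 0] fun s => ⟪gradient w (γ s), d⟫ := by
    filter_upwards [hev] with s hs using hs.deriv
  have hmax' : IsLocalMax (w ∘ γ) 0 := by
    have : Tendsto γ (𝓝 0) (𝓝 x) := by simpa [hγ0] using hγc.tendsto
    have h2 := this.eventually hmax
    filter_upwards [h2] with s hs
    simpa [hγ0] using hs
  have hd2 : HasDerivAt (fun s => ⟪gradient w (γ s), d⟫) ⟪A d, d⟫ 0 := by
    have h1 : HasDerivAt (fun s => gradient w (γ s)) (A d) 0 := by
      have : HasFDerivAt (gradient w) A (γ 0) := by rw [hγ0]; exact hA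
      exact this.comp_hasDerivAt 0 (hγd 0)
    simpa using h1.inner ℝ (hasDerivAt_const (0:ℝ) d)
  have hdd : deriv (deriv (w ∘ γ)) 0 = ⟪A d, d⟫ := by
    rw [hd1.deriv_eq, hd2.deriv]
  have hmin := isLocalMin_of_deriv_deriv_pos (hdd ▸ hpos) hmax'.deriv_eq_zero
    hev.self_of_nhds.continuousAt
  have hconst : (w ∘ γ) =ᶠ[𝓝 0] fun _ => (w ∘ γ) 0 := by
    filter_upwards [hmin, hmax'] with s h1 h2 using le_antisymm h2 h1
  have := hconst.deriv.deriv_eq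
  rw [hdd] at this
  simp at this
  linarith

/-- algebraic trace inequality -/
lemma trace_ineq (A B : Eucl n →L[ℝ] Eucl n) (p : Eucl n) (v ε K : ℝ) (hv : 0 < v)
    (hv2 : v ^ 2 = 1 + ‖p‖ ^ 2) (hε : 0 ≤ ε) (hB : ‖B‖ ≤ K)
    (hAB : ∀ d, ⟪(A + ε • B) d, d⟫ ≤ 0) :
    ∑ i, ⟪A (EuclideanSpace.single i 1), EuclideanSpace.single i 1⟫ - (v ^ 2)⁻¹ * ⟪A p, p⟫
      ≤ ε * ((n + 1) * K) := by
  have key : ∀ M : Eucl n →L[ℝ] Eucl n, (∀ d, ⟪M d, d⟫ ≤ 0) →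
      ∑ i, ⟪M (EuclideanSpace.single i 1), EuclideanSpace.single i 1⟫ - (v ^ 2)⁻¹ * ⟪M p, p⟫ ≤ 0 := by
    intro M hM
    set c : ℝ := 1 / (v * (v + 1)) with hc
    have hsum : ∑ i, ⟪M (EuclideanSpace.single i 1 - (c * p i) • p),
        EuclideanSpace.single i 1 - (c * p i) • p⟫ ≤ 0 := Finset.sum_nonpos fun i _ => hM _
    have hp : p = ∑ i, p i • (EuclideanSpace.single i 1 : Eucl n) := by
      ext j
      simp [Finset.sum_apply, Pi.single_apply]
    have e1 : ∑ i, p i * ⟪M (EuclideanSpace.single i 1), p⟫ = ⟪M p, p⟫ := by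
      conv_rhs => rw [show M p = ∑ i, p i • M (EuclideanSpace.single i 1) by
        conv_lhs => rw [hp]
        simp]
      simp [sum_inner, inner_smul_left]
    have e2 : ∑ i, p i * ⟪M p, EuclideanSpace.single i 1⟫ = ⟪M p, p⟫ := by
      conv_rhs => rw [show ⟪M p, p⟫ = ⟪M p, ∑ i, p i • (EuclideanSpace.single i 1 : Eucl n)⟫ by
        rw [← hp]]
      rw [inner_sum]
      simp only [inner_smul_right]
    have e3 : ∑ i, p i * p i = ‖p‖ ^ 2 := by
      rw [EuclideanSpace.real_norm_sq_eq]
      simp [sq]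
    have e4 : ∑ i, ⟪M (EuclideanSpace.single i 1 - (c * p i) • p),
        EuclideanSpace.single i 1 - (c * p i) • p⟫
        = ∑ i, ⟪M (EuclideanSpace.single i 1), EuclideanSpace.single i 1⟫
          - c * ∑ i, p i * ⟪M (EuclideanSpace.single i 1), p⟫
          - c * ∑ i, p i * ⟪M p, EuclideanSpace.single i 1⟫
          + c ^ 2 * (∑ i, p i * p i) * ⟪M p, p⟫ := by
      simp only [Finset.mul_sum, Finset.sum_mul, ← Finset.sum_sub_distrib, ← Finset.sum_add_distrib]
      refine Finset.sum_congr rfl fun i _ => ?_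
      simp only [map_sub, map_smul, inner_sub_left, inner_sub_right, real_inner_smul_left,
        real_inner_smul_right]
      ring
    rw [e4, e1, e2, e3] at hsum
    have hcoef : -c - c + c ^ 2 * ‖p‖ ^ 2 = - (v ^ 2)⁻¹ := by
      rw [show ‖p‖ ^ 2 = v ^ 2 - 1 by linarith, hc]
      field_simp
      ring
    have : ∀ q t : ℝ, t - c * q - c * q + c ^ 2 * ‖p‖ ^ 2 * q = t - (v^2)⁻¹ * q := by
      intro q t
      linear_combination q * hcoef
    rw [this] at hsum
    exact hsum
  have h1 := key _ hAB
  have hbd : ∀ y, |⟪B y, y⟫| ≤ K * ‖y‖ ^ 2 := by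
    intro y
    calc |⟪B y, y⟫| ≤ ‖B y‖ * ‖y‖ := abs_real_inner_le_norm _ _
      _ ≤ (K * ‖y‖) * ‖y‖ := by
        gcongr
        exact (B.le_opNorm y).trans (by gcongr)
      _ = _ := by ring
  have h2 : -(n * K) ≤ ∑ i, ⟪B (EuclideanSpace.single i 1), EuclideanSpace.single i 1⟫ := by
    have : ∑ i : Fin n, (-K) ≤ ∑ i, ⟪B (EuclideanSpace.single i 1), EuclideanSpace.single i 1⟫ := by
      refine Finset.sum_le_sum fun i _ => ?_
      have := (abs_le.1 (hbd (EuclideanSpace.single i 1))).1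
      simpa using this
    simpa using this
  have hK : 0 ≤ K := (norm_nonneg _).trans hB
  have h3 : (v ^ 2)⁻¹ * ⟪B p, p⟫ ≤ K := by
    have := (abs_le.1 (hbd p)).2
    rw [inv_mul_le_iff₀ (by positivity)]
    nlinarith
  simp only [add_apply, smul_apply, inner_add_left,
    real_inner_smul_left, Finset.sum_add_distrib, ← Finset.mul_sum] at h1
  nlinarith

/-- divergence of `G / sqrt(1+|G|^2)` -/
lemma divg_formula (G : Eucl n → Eucl n) (A : Eucl n →L[ℝ] Eucl n) (x : Eucl n)
    (hG : HasFDerivAt G A x) (v : ℝ) (hv : v = √(1 + ‖G x‖ ^ 2)) :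
    v * divg (fun y => (√(1 + ‖G y‖ ^ 2))⁻¹ • G y) x
      = ∑ i, ⟪A (EuclideanSpace.single i 1), EuclideanSpace.single i 1⟫
        - (v ^ 2)⁻¹ * ⟪A (G x), G x⟫ := by
  have hpos : 0 < 1 + ‖G x‖ ^ 2 := by positivity
  have hvpos : 0 < v := by rw [hv]; positivity
  have h1 : HasFDerivAt (fun y => 1 + ‖G y‖ ^ 2) (2 • (innerSL ℝ (G x)).comp A) x :=
    (hG.norm_sq).const_add 1
  have h2 : HasFDerivAt (fun y => (√(1 + ‖G y‖ ^ 2))⁻¹)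
      ((-(v ^ 2)⁻¹) • ((1 / (2 * v)) • (2 • (innerSL ℝ (G x)).comp A))) x := by
    have := (hasDerivAt_inv (x := √(1 + ‖G x‖ ^ 2)) (by positivity)).comp_hasFDerivAt x
      (h1.sqrt hpos.ne')
    rw [← hv] at this
    exact this
  have h3 := h2.fun_smul hG
  rw [← hv] at h3
  have h4 : ∀ i, fderiv ℝ (fun y => ((√(1 + ‖G y‖ ^ 2))⁻¹ • G y) i) x (EuclideanSpace.single i 1)
      = v⁻¹ * ⟪A (EuclideanSpace.single i 1), EuclideanSpace.single i 1⟫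
        - (v ^ 3)⁻¹ * (G x i * ⟪A (EuclideanSpace.single i 1), G x⟫) := by
    intro i
    have h5 := ((EuclideanSpace.proj i : Eucl n →L[ℝ] ℝ).hasFDerivAt.comp x h3).fderiv
    have h6 : (⇑(EuclideanSpace.proj i : Eucl n →L[ℝ] ℝ) ∘
        (fun y => (√(1 + ‖G y‖ ^ 2))⁻¹ • G y))
      = (fun y => ((√(1 + ‖G y‖ ^ 2))⁻¹ • G y) i) := by
      ext y; simp
    rw [h6] at h5
    rw [h5]
    simp [EuclideanSpace.inner_single_right, real_inner_comm]
    field_simp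
    try ring
  unfold divg
  rw [Finset.sum_congr rfl fun i _ => h4 i, Finset.sum_sub_distrib, ← Finset.mul_sum,
    ← Finset.mul_sum]
  have e1 : ∑ i, G x i * ⟪A (EuclideanSpace.single i 1), G x⟫ = ⟪A (G x), G x⟫ := by
    have hp : G x = ∑ i, G x i • (EuclideanSpace.single i 1 : Eucl n) := by
      ext j
      simp [Finset.sum_apply, Pi.single_apply]
    conv_rhs => rw [show A (G x) = ∑ i, G x i • A (EuclideanSpace.single i 1) by
        conv_lhs => rw [hp]
        simp]
    simp [sum_inner, inner_smul_left]
  rw [e1]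
  field_simp

lemma boundary_no_max (Ω : Set (Eucl n)) (w : Eucl n → ℝ) (G : Eucl n → Eucl n) (x ν : Eucl n)
    (hx : x ∈ closure Ω) (hent : ∀ᶠ s in 𝓝[>] (0:ℝ), x - s • ν ∈ Ω)
    (hw : ContinuousOn w (closure Ω)) (hG : ContinuousOn G (closure Ω))
    (hd : ∀ y ∈ Ω, HasGradientAt w (G y) y) (hneg : ⟪G x, ν⟫ < 0) :
    ∃ y ∈ Ω, w x < w y := by
  set γ : ℝ → Eucl n := fun s => x - s • ν with hγ
  have hγ0 : γ 0 = x := by simp [hγ]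
  have hγd : ∀ s, HasDerivAt γ (-ν) s := by
    intro s
    have := ((hasDerivAt_id s).smul_const ν).const_sub x
    rw [one_smul] at this
    exact this
  have hγc : Continuous γ := by fun_prop
  have ht : Tendsto γ (𝓝[>] 0) (𝓝[closure Ω] x) := by
    refine tendsto_nhdsWithin_iff.2 ⟨?_, hent.mono fun s hs => subset_closure hs⟩
    have : Tendsto γ (𝓝 0) (𝓝 x) := by simpa [hγ0] using hγc.tendsto 0
    exact this.mono_left nhdsWithin_le_nhds
  have hneg' : ∀ᶠ s in 𝓝[>] (0:ℝ), ⟪G (γ s), ν⟫ < 0 := by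
    have h1 : Tendsto (fun s => ⟪G (γ s), ν⟫) (𝓝[>] 0) (𝓝 ⟪G x, ν⟫) :=
      ((hG x hx).tendsto.comp ht).inner tendsto_const_nhds
    exact h1.eventually (gt_mem_nhds hneg)
  obtain ⟨δ, hδ, hsub⟩ := mem_nhdsGT_iff_exists_Ioo_subset.1 (hent.and hneg')
  have hδ : 0 < δ := hδ
  have hmem : ∀ s ∈ Ioc 0 (δ/2), γ s ∈ Ω ∧ ⟪G (γ s), ν⟫ < 0 := fun s hs =>
    hsub ⟨hs.1, by linarith [hs.2]⟩
  have hder : ∀ s ∈ Ioc 0 (δ/2), HasDerivAt (w ∘ γ) (-⟪G (γ s), ν⟫) s := by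
    intro s hs
    have := (hd _ (hmem s hs).1).hasFDerivAt.comp_hasDerivAt s (hγd s)
    simpa using this
  have hmono : StrictMonoOn (w ∘ γ) (Icc 0 (δ/2)) := by
    apply strictMonoOn_of_deriv_pos (convex_Icc _ _)
    · apply hw.comp hγc.continuousOn
      intro s hs
      rcases eq_or_lt_of_le hs.1 with h | h
      · rw [← h, hγ0]; exact hx
      · exact subset_closure (hmem s ⟨h, hs.2⟩).1
    · intro s hs
      rw [interior_Icc] at hs
      have hs' : s ∈ Ioc 0 (δ/2) := ⟨hs.1, hs.2.le⟩
      rw [(hder s hs').deriv]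
      linarith [(hmem s hs').2]
  have := hmono (left_mem_Icc.2 (by linarith)) (right_mem_Icc.2 (by linarith)) (by linarith : 0 < δ/2)
  refine ⟨γ (δ/2), (hmem _ ⟨by linarith, le_rfl⟩).1, ?_⟩
  simpa [hγ0] using this

lemma interior_est (u : Eucl n → ℝ → ℝ) (t : ℝ) (h : Eucl n → ℝ) (x : Eucl n) (ε K : ℝ)
    (hε : 0 ≤ ε) (hu : ContDiffAt ℝ 2 (fun y => u y t) x) (hh : ContDiffAt ℝ 2 h x)
    (hK1 : ‖gradient h x‖ ≤ K) (hK2 : ‖fderiv ℝ (gradient h) x‖ ≤ K)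
    (hmax : IsLocalMax (fun y => u y t + ε * h y) x) :
    vel u x t * divg (fun y => (vel u y t)⁻¹ • sgrad u y t) x ≤ ε * ((n + 1) * K) ∧
      vel u x t ≤ 1 + ε * K := by
  have hadd : ∀ y, DifferentiableAt ℝ (fun y => u y t) y → DifferentiableAt ℝ h y →
      gradient (fun y => u y t + ε * h y) y = sgrad u y t + ε • gradient h y := by
    intro y h1 h2
    apply ext_inner_right ℝ
    intro d
    rw [inner_gradient_left, inner_add_left, real_inner_smul_left, sgrad, inner_gradient_left,
      inner_gradient_left, fderiv_fun_add h1 (h2.const_mul ε), fderiv_const_mul h2]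
    simp
  have hud := hu.differentiableAt (by simp)
  have hhd := hh.differentiableAt (by simp)
  have hGu : DifferentiableAt ℝ (fun y => sgrad u y t) x :=
    (contDiffAt_gradient (k := 1) _ x hu (by norm_num [one_add_one_eq_two])).differentiableAt (by simp)
  have hGh : DifferentiableAt ℝ (gradient h) x :=
    (contDiffAt_gradient (k := 1) _ x hh (by norm_num [one_add_one_eq_two])).differentiableAt (by simp)
  have hw : ContDiffAt ℝ 2 (fun y => u y t + ε * h y) x := hu.add (contDiffAt_const.mul hh)
  have hev : gradient (fun y => u y t + ε * h y) =ᶠ[𝓝 x] fun y => sgrad u y t + ε • gradient h y := by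
    filter_upwards [hu.eventually (by simp), hh.eventually (by simp)] with y h1 h2
    exact hadd y (h1.differentiableAt (by simp)) (h2.differentiableAt (by simp))
  have hA : HasFDerivAt (gradient (fun y => u y t + ε * h y))
      (fderiv ℝ (fun y => sgrad u y t) x + ε • fderiv ℝ (gradient h) x) x :=
    (hGu.hasFDerivAt.add (hGh.hasFDerivAt.const_smul ε)).congr_of_eventuallyEq hev
  have hvv : vel u x t ^ 2 = 1 + ‖sgrad u x t‖ ^ 2 := Real.sq_sqrt (by positivity)
  have hvp : 0 < vel u x t := Real.sqrt_pos.2 (by positivity)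
  constructor
  · have h1 := divg_formula (fun y => sgrad u y t) _ x hGu.hasFDerivAt (vel u x t) rfl
    have h2 := trace_ineq _ _ (sgrad u x t) (vel u x t) ε K hvp hvv hε hK2
      (second_deriv_test _ x hw hmax _ hA)
    exact h1.trans_le h2
  · have h0 : sgrad u x t + ε • gradient h x = 0 := by
      rw [← hadd x hud hhd]
      apply ext_inner_right ℝ
      intro d
      rw [inner_gradient_left, hmax.fderiv_eq_zero]
      simp
    have h1 : ‖sgrad u x t‖ ≤ ε * K := by
      rw [eq_neg_of_add_eq_zero_left h0, norm_neg, norm_smul, Real.norm_of_nonneg hε]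
      gcongr
    have := norm_nonneg (sgrad u x t)
    apply Real.sqrt_le_iff.2
    constructor
    · linarith
    · nlinarith

lemma three_le : (2 + 1 : WithTop ℕ∞) ≤ ((⊤ : ℕ∞) : WithTop ℕ∞) := by
  have h : (((3 : ℕ) : ℕ∞) : WithTop ℕ∞) ≤ ((⊤ : ℕ∞) : WithTop ℕ∞) := WithTop.coe_le_coe.2 le_top
  have e : (2 + 1 : WithTop ℕ∞) = (((3 : ℕ) : ℕ∞) : WithTop ℕ∞) := by norm_num
  rw [e]; exact h

lemma upper_bound (T : ℝ) (Ω : Set (Eucl n)) (hΩopen : IsOpen Ω)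
    (hΩbdd : Bornology.IsBounded Ω) (u : Eucl n → ℝ → ℝ)
    (reg_x : ∀ t ∈ Ioo (0 : ℝ) T, ContDiffOn ℝ 2 (fun x => u x t) Ω)
    (reg_t : ∀ x ∈ Ω, ∀ t ∈ Ioo (0 : ℝ) T, DifferentiableAt ℝ (u x) t)
    (cont : ContinuousOn (fun p : Eucl n × ℝ => u p.1 p.2) (closure Ω ×ˢ Icc 0 T))
    (grad_cont : ∀ t ∈ Ioo (0 : ℝ) T, ContinuousOn (fun x => sgrad u x t) (closure Ω))
    (F S : ℝ) (hF : 0 ≤ F)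
    (pde : ∀ x ∈ Ω, ∀ t ∈ Ioo (0 : ℝ) T,
      deriv (u x) t / vel u x t ≤ divg (fun y => (vel u y t)⁻¹ • sgrad u y t) x + F)
    (ν : Eucl n → Eucl n)
    (neumann : ∀ t ∈ Ioo (0 : ℝ) T, ∀ x ∈ frontier Ω, ⟪sgrad u x t, ν x⟫ = 0)
    (hS : ∀ x ∈ Ω, u x 0 ≤ S)
    (h : Eucl n → ℝ) (hh : ContDiff ℝ ∞ h)
    (hent : ∀ x ∈ frontier Ω, ∀ᶠ s in 𝓝[>] (0:ℝ), x - s • ν x ∈ Ω)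
    (hneg : ∀ x ∈ frontier Ω, ⟪gradient h x, ν x⟫ < 0) :
    ∀ x ∈ Ω, ∀ t ∈ Ioo (0 : ℝ) T, u x t ≤ F * t + S := by
  intro x₁ hx₁ t₁ ht₁
  have hcomp : IsCompact (closure Ω) := hΩbdd.isCompact_closure
  have hgrad : ContDiff ℝ 2 (gradient h) := contDiff_iff_contDiffAt.2 fun x =>
    contDiffAt_gradient _ x hh.contDiffAt three_le
  obtain ⟨K0, hK0⟩ := hcomp.exists_bound_of_continuousOn hh.continuous.continuousOn
  obtain ⟨K1, hK1⟩ := hcomp.exists_bound_of_continuousOn hgrad.continuous.continuousOn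
  obtain ⟨K2, hK2⟩ := hcomp.exists_bound_of_continuousOn
    (hgrad.continuous_fderiv (by simp)).continuousOn
  set K := max K0 (max K1 K2) with hK
  replace hK0 : ∀ x ∈ closure Ω, ‖h x‖ ≤ K := fun x hx => (hK0 x hx).trans (by simp [hK])
  replace hK1 : ∀ x ∈ closure Ω, ‖gradient h x‖ ≤ K := fun x hx => (hK1 x hx).trans (by simp [hK])
  replace hK2 : ∀ x ∈ closure Ω, ‖fderiv ℝ (gradient h) x‖ ≤ K :=
    fun x hx => (hK2 x hx).trans (by simp [hK])
  have hS' : ∀ x ∈ closure Ω, u x 0 ≤ S := by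
    intro x hx
    have hc : ContinuousOn (fun x => u x 0) (closure Ω) := by
      refine cont.comp (f := fun x => (x, (0:ℝ))) (by fun_prop) fun y hy => ?_
      exact ⟨hy, le_rfl, (ht₁.1.trans ht₁.2).le⟩
    have hcl : closure Ω ⊆ closure {x ∈ closure Ω | u x 0 ≤ S} :=
      closure_mono fun y hy => ⟨subset_closure hy, hS y hy⟩
    have : IsClosed {x ∈ closure Ω | u x 0 ≤ S} :=
      isClosed_closure.isClosed_le hc continuousOn_const
    rw [this.closure_eq] at hcl
    exact (hcl hx).2
  set C := (n + 1) * K + F * K with hC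
  have main : ∀ ε > 0, u x₁ t₁ ≤ F * t₁ + S + ε * ((C + 1) * t₁ + 2 * K) := by
    intro ε hε
    set c := F + ε * (C + 1) with hc
    have hcont : ContinuousOn (fun p : Eucl n × ℝ => u p.1 p.2 + ε * h p.1 - c * p.2)
        (closure Ω ×ˢ Icc 0 t₁) := by
      have := cont.mono (Set.prod_mono (subset_refl (closure Ω)) (Icc_subset_Icc (le_refl (0:ℝ)) ht₁.2.le))
      have h2 := hh.continuous
      fun_prop
    obtain ⟨⟨x, t⟩, hxt, hmax⟩ := (hcomp.prod isCompact_Icc).exists_isMaxOn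
      ⟨(x₁, t₁), subset_closure hx₁, ht₁.1.le, le_rfl⟩ hcont
    obtain ⟨hx, ht⟩ := hxt
    simp only at hx ht
    have hmax' : ∀ y ∈ closure Ω, ∀ s ∈ Icc 0 t₁,
        u y s + ε * h y - c * s ≤ u x t + ε * h x - c * t := fun y hy s hs => hmax (a := (y, s)) ⟨hy, hs⟩
    have h1 := hmax' x₁ (subset_closure hx₁) t₁ ⟨ht₁.1.le, le_rfl⟩
    rcases eq_or_lt_of_le ht.1 with h0 | htpos
    · rw [← h0] at h1
      have := hS' x hx
      have a1 := (abs_le.1 (hK0 x hx)).2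
      have a2 := (abs_le.1 (hK0 x₁ (subset_closure hx₁))).1
      nlinarith
    exfalso
    have htT : t ∈ Ioo 0 T := ⟨htpos, ht.2.trans_lt ht₁.2⟩
    by_cases hxΩ : x ∈ Ω
    · have hloc : IsLocalMax (fun y => u y t + ε * h y) x := by
        filter_upwards [hΩopen.mem_nhds hxΩ] with y hy
        have := hmax' y (subset_closure hy) t ht
        linarith
      obtain ⟨e1, e2⟩ := interior_est u t h x ε K hε.le
        ((reg_x t htT).contDiffAt (hΩopen.mem_nhds hxΩ)) (hh.of_le (le_self_add.trans three_le)).contDiffAt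
        (hK1 x hx) (hK2 x hx) hloc
      have e3 := pde x hxΩ t htT
      have hvp : 0 < vel u x t := Real.sqrt_pos.2 (by positivity)
      rw [div_le_iff₀ hvp] at e3
      have hd : c ≤ deriv (u x) t := by
        have hder : HasDerivAt (fun s => u x s - c * s) (deriv (u x) t - c) t := by
          have := (reg_t x hxΩ t htT).hasDerivAt.fun_sub ((hasDerivAt_id t).const_mul c)
          rw [mul_one] at this
          exact this
        by_contra! hlt
        have hnegd : deriv (u x) t - c < 0 := by linarith
        have hslope : Tendsto (slope (fun s => u x s - c * s) t) (𝓝[<] t)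
            (𝓝 (deriv (u x) t - c)) := (hasDerivAt_iff_tendsto_slope.1 hder).mono_left
          (nhdsWithin_mono t (fun s (hs : s < t) => ne_of_lt hs : Iio t ⊆ {t}ᶜ))
        have hev := hslope.eventually (gt_mem_nhds hnegd)
        have hev2 : ∀ᶠ s in 𝓝[<] t, s ∈ Ioo 0 t := Ioo_mem_nhdsLT htpos
        obtain ⟨s, hs1, hs2⟩ := (hev.and hev2).exists
        rw [slope_def_field, div_neg_iff] at hs1
        have := hmax' x hx s ⟨hs2.1.le, hs2.2.le.trans ht.2⟩
        rcases hs1 with h | h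
        · linarith [h.1]
        · linarith [h.2, hs2.2]
      have e4 : F * vel u x t ≤ F * (1 + ε * K) := by gcongr
      rw [hc, hC] at hd
      nlinarith
    · have hfr : x ∈ frontier Ω := by
        rw [hΩopen.frontier_eq]; exact ⟨hx, hxΩ⟩
      have hslice : ContinuousOn (fun y => u y t) (closure Ω) :=
        cont.comp (f := fun x => (x, t)) (by fun_prop) fun y hy => ⟨hy, htT.1.le, htT.2.le⟩
      have hc2 := hh.continuous
      have hg2 := hgrad.continuous
      have hsg := grad_cont t htT
      obtain ⟨y, hy, hlt⟩ := boundary_no_max Ω (fun y => u y t + ε * h y)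
        (fun y => sgrad u y t + ε • gradient h y) x (ν x) hx (hent x hfr)
        (by fun_prop) (by fun_prop) (by
          intro y hy
          have a1 : DifferentiableAt ℝ (fun y => u y t) y :=
            ((reg_x t htT).contDiffAt (hΩopen.mem_nhds hy)).differentiableAt (by simp)
          have a2 : DifferentiableAt ℝ h y := hh.contDiffAt.differentiableAt (by simp)
          rw [hasGradientAt_iff_hasFDerivAt]
          have a3 := a1.hasFDerivAt.fun_add (a2.hasFDerivAt.const_mul ε)
          refine a3.congr_fderiv ?_
          ext1 d
          simp [sgrad, inner_add_left, real_inner_smul_left, inner_gradient_left])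
        (by
          rw [inner_add_left, neumann t htT x hfr, real_inner_smul_left, zero_add]
          exact mul_neg_of_pos_of_neg hε (hneg x hfr))
      have := hmax' y (subset_closure hy) t ht
      linarith
  have hlim : Tendsto (fun ε : ℝ => F * t₁ + S + ε * ((C + 1) * t₁ + 2 * K)) (𝓝[>] 0)
      (𝓝 (F * t₁ + S)) := by
    have : Continuous (fun ε : ℝ => F * t₁ + S + ε * ((C + 1) * t₁ + 2 * K)) := by fun_prop
    simpa using (this.tendsto 0).mono_left nhdsWithin_le_nhds
  exact ge_of_tendsto hlim (eventually_mem_nhdsWithin.mono main)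

lemma sdist_inside (Ω : Set (Eucl n)) (y : Eucl n) (hy : y ∈ closure Ω) :
    sdist Ω y = - infDist y Ωᶜ := by
  rw [sdist, infDist_zero_of_mem_closure hy, zero_sub]

lemma mem_of_sdist_neg (Ω : Set (Eucl n)) (y : Eucl n) (hy : sdist Ω y < 0) : y ∈ Ω := by
  by_contra h
  have : infDist y Ωᶜ = 0 := infDist_zero_of_mem h
  have h2 : 0 ≤ infDist y Ω := infDist_nonneg
  rw [sdist, this] at hy
  linarith

lemma one_le_norm_inside (Ω : Set (Eucl n)) (hΩ : IsOpen Ω) (hne : Ωᶜ.Nonempty) (y : Eucl n)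
    (hy : y ∈ Ω) (hd : DifferentiableAt ℝ (sdist Ω) y) : 1 ≤ ‖fderiv ℝ (sdist Ω) y‖ := by
  obtain ⟨p, hp, hpy⟩ := hΩ.isClosed_compl.exists_infDist_eq_dist hne y
  have hyp : 0 < ‖p - y‖ := by
    rw [norm_pos_iff, sub_ne_zero]
    rintro rfl
    exact hp hy
  set γ : ℝ → Eucl n := fun s => y + s • (p - y) with hγ
  have hγ0 : γ 0 = y := by simp [hγ]
  have hγd : HasDerivAt γ (p - y) 0 := by
    have := ((hasDerivAt_id (0:ℝ)).smul_const (p - y)).const_add y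
    rw [one_smul] at this
    exact this
  have hval : ∀ s ∈ Ico (0:ℝ) 1, sdist Ω (γ s) = -‖p - y‖ + s * ‖p - y‖ := by
    intro s hs
    have a1 : dist y (γ s) = s * ‖p - y‖ := by
      rw [dist_eq_norm, hγ]
      simp [norm_smul, abs_of_nonneg hs.1]
    have a2 : dist (γ s) p = (1 - s) * ‖p - y‖ := by
      rw [dist_eq_norm, show γ s - p = -((1 - s) • (p - y)) by simp only [hγ]; module, norm_neg,
        norm_smul, Real.norm_of_nonneg (by linarith [hs.2])]
    have a3 : infDist (γ s) Ωᶜ ≤ (1 - s) * ‖p - y‖ := a2 ▸ infDist_le_dist_of_mem hp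
    have a4 : infDist y Ωᶜ ≤ infDist (γ s) Ωᶜ + dist y (γ s) := infDist_le_infDist_add_dist
    have a5 : infDist y Ωᶜ = ‖p - y‖ := by rw [hpy, dist_eq_norm, norm_sub_rev]
    have a6 : infDist (γ s) Ωᶜ = (1 - s) * ‖p - y‖ := by
      apply le_antisymm a3
      rw [a1, a5] at a4
      linarith
    have a7 : γ s ∈ Ω := by
      by_contra hcon
      rw [infDist_zero_of_mem (show γ s ∈ Ωᶜ from hcon)] at a6
      have : 0 < (1 - s) * ‖p - y‖ := mul_pos (by linarith [hs.2]) hyp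
      linarith
    rw [sdist_inside Ω _ (subset_closure a7), a6]
    ring
  have h1 : HasDerivAt (sdist Ω ∘ γ) (fderiv ℝ (sdist Ω) y (p - y)) 0 := by
    have : HasFDerivAt (sdist Ω) (fderiv ℝ (sdist Ω) y) (γ 0) := by
      rw [hγ0]; exact hd.hasFDerivAt
    exact this.comp_hasDerivAt 0 hγd
  have h2 : HasDerivWithinAt (sdist Ω ∘ γ) ‖p - y‖ (Ico 0 1) 0 := by
    have : HasDerivAt (fun s : ℝ => -‖p - y‖ + s * ‖p - y‖) ‖p - y‖ 0 := by
      simpa using ((hasDerivAt_id (0:ℝ)).mul_const ‖p - y‖).const_add (-‖p - y‖)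
    exact this.hasDerivWithinAt.congr hval (hval 0 (by simp))
  have h3 : fderiv ℝ (sdist Ω) y (p - y) = ‖p - y‖ :=
    UniqueDiffWithinAt.eq_deriv _ (uniqueDiffOn_Ico 0 1 0 (by simp)) h1.hasDerivWithinAt h2
  have h4 := (fderiv ℝ (sdist Ω) y).le_opNorm (p - y)
  rw [h3, norm_norm] at h4
  by_contra! h5
  nlinarith

lemma outNormal_ne_zero (Ω : Set (Eucl n)) (hΩ : IsOpen Ω) (hs : SmoothBoundary Ω) (x : Eucl n)
    (hx : x ∈ frontier Ω) : outNormal Ω x ≠ 0 := by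
  obtain ⟨U, hU, hfU, hsm⟩ := hs
  have hxU := hfU hx
  have hcd : ContinuousOn (fderiv ℝ (sdist Ω)) U := hsm.continuousOn_fderiv_of_isOpen hU (by simp)
  have hcx : ContinuousAt (fderiv ℝ (sdist Ω)) x := hcd.continuousAt (hU.mem_nhds hxU)
  have hne : Ωᶜ.Nonempty := by
    rw [hΩ.frontier_eq] at hx
    exact ⟨x, hx.2⟩
  have hfreq : ∃ᶠ y in 𝓝 x, 1 ≤ ‖fderiv ℝ (sdist Ω) y‖ := by
    have h1 : ∃ᶠ y in 𝓝 x, y ∈ Ω := mem_closure_iff_frequently.1 (frontier_subset_closure hx)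
    refine (h1.and_eventually (hU.mem_nhds hxU)).mono fun y hy => ?_
    exact one_le_norm_inside Ω hΩ hne y hy.1
      ((hsm.contDiffAt (hU.mem_nhds hy.2)).differentiableAt (by simp))
  intro h0
  have h00 : fderiv ℝ (sdist Ω) x = 0 := by
    rw [← toDual_gradient]
    rw [outNormal] at h0
    rw [h0, map_zero]
  have hlt : ∀ᶠ y in 𝓝 x, ‖fderiv ℝ (sdist Ω) y‖ < 1 :=
    hcx.norm.eventually (gt_mem_nhds (by simp [h00]))
  obtain ⟨y, h1, h2⟩ := (hfreq.and_eventually hlt).exists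
  linarith

lemma sdist_frontier (Ω : Set (Eucl n)) (x : Eucl n) (hΩ : IsOpen Ω) (hx : x ∈ frontier Ω) :
    sdist Ω x = 0 := by
  rw [sdist_inside Ω x (frontier_subset_closure hx)]
  rw [hΩ.frontier_eq] at hx
  rw [infDist_zero_of_mem (show x ∈ Ωᶜ from hx.2), neg_zero]

lemma entering (Ω : Set (Eucl n)) (hΩ : IsOpen Ω) (hs : SmoothBoundary Ω) (x : Eucl n)
    (hx : x ∈ frontier Ω) : ∀ᶠ s in 𝓝[>] (0:ℝ), x - s • outNormal Ω x ∈ Ω := by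
  have hne := outNormal_ne_zero Ω hΩ hs x hx
  obtain ⟨U, hU, hfU, hsm⟩ := hs
  have hd : DifferentiableAt ℝ (sdist Ω) x :=
    (hsm.contDiffAt (hU.mem_nhds (hfU hx))).differentiableAt (by simp)
  set ν := outNormal Ω x with hν
  set γ : ℝ → Eucl n := fun s => x - s • ν with hγ
  have hγ0 : γ 0 = x := by simp [hγ]
  have hγd : HasDerivAt γ (-ν) 0 := by
    have := ((hasDerivAt_id (0:ℝ)).smul_const ν).const_sub x
    rw [one_smul] at this
    exact this
  have h1 : HasDerivAt (sdist Ω ∘ γ) (-⟪ν, ν⟫) 0 := by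
    have : HasFDerivAt (sdist Ω) (fderiv ℝ (sdist Ω) x) (γ 0) := by
      rw [hγ0]; exact hd.hasFDerivAt
    have := this.comp_hasDerivAt 0 hγd
    rw [map_neg, ← inner_gradient_left] at this
    exact this
  have hneg : -⟪ν, ν⟫ < 0 := by
    have := real_inner_self_pos.2 hne
    linarith
  have hslope : Tendsto (slope (sdist Ω ∘ γ) 0) (𝓝[>] 0) (𝓝 (-⟪ν, ν⟫)) := (hasDerivAt_iff_tendsto_slope.1 h1).mono_left
    (nhdsWithin_mono 0 (fun s (hs : 0 < s) => ne_of_gt hs : Ioi (0:ℝ) ⊆ {0}ᶜ))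
  filter_upwards [hslope.eventually (gt_mem_nhds hneg), eventually_mem_nhdsWithin] with s hs1 hs2
  apply mem_of_sdist_neg
  have hs2 : 0 < s := hs2
  rw [slope_def_field, div_lt_iff₀ (by linarith)] at hs1
  have h0 : (sdist Ω ∘ γ) 0 = 0 := by simp [hγ0, sdist_frontier Ω x hΩ hx]
  rw [h0] at hs1
  simpa [hγ] using hs1

lemma exists_barrier (Ω : Set (Eucl n)) (hΩ : IsOpen Ω) (hs : SmoothBoundary Ω) :
    ∃ h : Eucl n → ℝ, ContDiff ℝ ∞ h ∧
      ∀ x ∈ frontier Ω, ⟪gradient h x, outNormal Ω x⟫ < 0 := by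
  have hs' := hs
  obtain ⟨U, hU, hfU, hsm⟩ := hs
  obtain ⟨χ, h0, h1, -⟩ := exists_contMDiffMap_zero_one_nhds_of_isClosed (n := (⊤ : ℕ∞)) (modelWithCornersSelf ℝ (Eucl n))
    hU.isClosed_compl (isClosed_frontier (s := Ω)) (disjoint_compl_left_iff_subset.2 hfU)
  have hχ : ContDiff ℝ ∞ χ := χ.contMDiff.contDiff
  refine ⟨fun y => - (χ y * sdist Ω y), ?_, ?_⟩
  · rw [contDiff_iff_contDiffAt]
    intro x
    by_cases hx : x ∈ U
    · exact (hχ.contDiffAt.mul (hsm.contDiffAt (hU.mem_nhds hx))).neg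
    · have : ∀ᶠ y in 𝓝 x, χ y = 0 := h0.filter_mono (nhds_le_nhdsSet hx)
      refine (contDiffAt_const (c := (0:ℝ))).congr_of_eventuallyEq ?_
      filter_upwards [this] with y hy
      simp [hy]
  · intro x hx
    have : ∀ᶠ y in 𝓝 x, χ y = 1 := h1.filter_mono (nhds_le_nhdsSet hx)
    have he : (fun y => - (χ y * sdist Ω y)) =ᶠ[𝓝 x] fun y => - sdist Ω y := by
      filter_upwards [this] with y hy
      simp [hy]
    rw [inner_gradient_left, he.fderiv_eq, fderiv_fun_neg, neg_apply,
      ← inner_gradient_left]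
    have := real_inner_self_pos.2 (outNormal_ne_zero Ω hΩ hs' x hx)
    rw [outNormal] at *
    linarith

lemma abs_fdotn_le (f : Eucl n → ℝ → ℝ → Eucl (n + 1)) (u : Eucl n → ℝ → ℝ)
    (x : Eucl n) (t F : ℝ) (hF : ‖f x (u x t) t‖ ≤ F) : |fdotn f u x t| ≤ F := by
  have hvv : vel u x t ^ 2 = 1 + ‖sgrad u x t‖ ^ 2 := Real.sq_sqrt (by positivity)
  have hvp : 0 < vel u x t := Real.sqrt_pos.2 (by positivity)
  have h1 : ‖unormal u x t‖ ^ 2 = 1 := by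
    rw [EuclideanSpace.real_norm_sq_eq, Fin.sum_univ_castSucc]
    simp only [unormal, WithLp.equiv_symm_apply, Fin.snoc_castSucc, Fin.snoc_last, div_pow, neg_sq]
    rw [← Finset.sum_div, ← EuclideanSpace.real_norm_sq_eq]
    field_simp
    linarith
  have h2 : ‖unormal u x t‖ = 1 := by
    nlinarith [norm_nonneg (unormal u x t)]
  have := abs_real_inner_le_norm (f x (u x t) t) (unormal u x t)
  rw [h2, mul_one] at this
  exact this.trans hF

lemma sgrad_neg (u : Eucl n → ℝ → ℝ) (x : Eucl n) (t : ℝ) :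
    sgrad (fun y s => - u y s) x t = - sgrad u x t := by
  apply ext_inner_right ℝ
  intro d
  rw [inner_neg_left, sgrad, sgrad, inner_gradient_left, inner_gradient_left, fderiv_fun_neg,
    neg_apply]

lemma vel_neg (u : Eucl n → ℝ → ℝ) (x : Eucl n) (t : ℝ) :
    vel (fun y s => - u y s) x t = vel u x t := by
  rw [vel, vel, sgrad_neg, norm_neg]

lemma divg_neg (G : Eucl n → Eucl n) (x : Eucl n) : divg (fun y => - G y) x = - divg G x := by
  simp [divg, fderiv_fun_neg]

/-- sup bound for solutions via comparison. -/
theorem sup_bound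
    (n : ℕ) (T : ℝ) (hT : 0 < T)
    (Ω : Set (Eucl n)) (hΩopen : IsOpen Ω) (hΩbdd : Bornology.IsBounded Ω)
    (hΩsmooth : SmoothBoundary Ω)
    (f : Eucl n → ℝ → ℝ → Eucl (n + 1))
    (hfcont : Continuous (fun P : Eucl n × ℝ × ℝ => f P.1 P.2.1 P.2.2))
    (u₀ : Eucl n → ℝ) (u : Eucl n → ℝ → ℝ)
    (hsol : IsMCFSolution Ω f u₀ u T)
    (F S : ℝ)
    -- `sup_{Ω×ℝ×[0,T]} |f⃗| ≤ F`  (boundedness of the transport term)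
    (hF : ∀ x ∈ Ω, ∀ z : ℝ, ∀ t ∈ Icc (0 : ℝ) T, ‖f x z t‖ ≤ F)
    -- `sup_Ω |u₀| ≤ S`
    (hS : ∀ x ∈ Ω, |u₀ x| ≤ S) :
    ∀ x ∈ Ω, ∀ t ∈ Ioo (0 : ℝ) T, |u x t| ≤ F * T + S := by
  intro x hx t ht
  obtain ⟨h, hh, hneg⟩ := exists_barrier Ω hΩopen hΩsmooth
  have hF0 : 0 ≤ F := (norm_nonneg _).trans (hF x hx 0 0 ⟨le_rfl, hT.le⟩)
  have hfd : ∀ x ∈ Ω, ∀ t ∈ Ioo (0:ℝ) T, |fdotn f u x t| ≤ F := fun x hx t ht =>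
    abs_fdotn_le f u x t F (hF x hx _ t (Ioo_subset_Icc_self ht))
  have hS1 : ∀ x ∈ Ω, |u x 0| ≤ S := fun x hx => by
    rw [hsol.init x (subset_closure hx)]; exact hS x hx
  have h1 := upper_bound T Ω hΩopen hΩbdd u hsol.reg_x hsol.reg_t hsol.cont hsol.grad_cont F S hF0
    (fun x hx t ht => by
      rw [hsol.pde x hx t ht]
      linarith [(abs_le.1 (hfd x hx t ht)).2])
    (outNormal Ω) hsol.neumann (fun x hx => (abs_le.1 (hS1 x hx)).2) h hh
    (entering Ω hΩopen hΩsmooth) hneg x hx t ht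
  have h2 := upper_bound T Ω hΩopen hΩbdd (fun y s => - u y s) (fun t ht => (hsol.reg_x t ht).neg)
    (fun x hx t ht => (hsol.reg_t x hx t ht).neg) hsol.cont.neg
    (fun t ht => by simpa only [sgrad_neg] using (hsol.grad_cont t ht).fun_neg) F S hF0
    (fun x hx t ht => by
      simp only [sgrad_neg, vel_neg, smul_neg]
      rw [divg_neg, deriv.fun_neg, neg_div, hsol.pde x hx t ht]
      linarith [(abs_le.1 (hfd x hx t ht)).1])
    (outNormal Ω) (fun t ht x hx => by rw [sgrad_neg, inner_neg_left, hsol.neumann t ht x hx, neg_zero])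
    (fun x hx => by linarith [(abs_le.1 (hS1 x hx)).1]) h hh
    (entering Ω hΩopen hΩsmooth) hneg x hx t ht
  have h3 : F * t ≤ F * T := by gcongr; exact ht.2.le
  rw [abs_le]
  constructor <;> linarith

end
end

section
/- Let n ≥ 1 and let p, q ≥ 1 satisfy n/p + 2/q > 1. Then there exist a bounded convex open set Ω ⊆ ℝⁿ with smooth boundary, a smooth transport term f⃗ : Ω×ℝ×[0,1) → ℝ^{n+1}, and a classical solution u of the graphical mean curvature flow with transport term f⃗ and Neumann boundary condition on Ω×(0,1), of the form u(x,t) = (1−t)^α φ(x/√(1−t)) with φ ∈ C_c^∞(Ω) and α < 1/2, such that ‖f⃗‖_{L^q_tL^p_x(0,1,Γ_t)} < ∞ while sup_{Ω×(0,1)} |du| = ∞. In particular, the hypothesis n/p + 2/q < 1 in the a priori gradient estimate cannot be relaxed to n/p + 2/q > 1. -/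
open MeasureTheory Metric Set Real Filter
open scoped RealInnerProductSpace ENNReal NNReal Topology ContDiff

noncomputable section

variable {n : ℕ}

def hh (r : ℝ) : ℝ := Real.smoothTransition (1 - r)
def h1 : ℝ → ℝ := deriv hh
def h2 : ℝ → ℝ := deriv h1

lemma hh_smooth : ContDiff ℝ ∞ hh :=
  Real.smoothTransition.contDiff.comp (contDiff_const.sub contDiff_id)
lemma h1_smooth : ContDiff ℝ ∞ h1 := (contDiff_infty_iff_deriv.1 hh_smooth).2
lemma h2_smooth : ContDiff ℝ ∞ h2 := (contDiff_infty_iff_deriv.1 h1_smooth).2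
lemma hh_deriv (r : ℝ) : HasDerivAt hh (h1 r) r :=
  ((contDiff_infty_iff_deriv.1 hh_smooth).1 r).hasDerivAt
lemma h1_deriv (r : ℝ) : HasDerivAt h1 (h2 r) r :=
  ((contDiff_infty_iff_deriv.1 h1_smooth).1 r).hasDerivAt
lemma hh_zero {r : ℝ} (hr : 1 ≤ r) : hh r = 0 :=
  Real.smoothTransition.zero_of_nonpos (by linarith)
lemma hh_abs (r : ℝ) : |hh r| ≤ 1 := by
  rw [hh, abs_of_nonneg (Real.smoothTransition.nonneg _)]
  exact Real.smoothTransition.le_one _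
lemma h1_zero {r : ℝ} (hr : 1 < r) : h1 r = 0 := by
  have : hh =ᶠ[𝓝 r] fun _ => 0 := by
    filter_upwards [lt_mem_nhds hr] with y hy using hh_zero hy.le
  rw [h1, this.deriv_eq]; simp
lemma h2_zero {r : ℝ} (hr : 1 < r) : h2 r = 0 := by
  have : h1 =ᶠ[𝓝 r] fun _ => 0 := by
    filter_upwards [lt_mem_nhds hr] with y hy using h1_zero hy
  rw [h2, this.deriv_eq]; simp
lemma h1_neg : ∃ c ∈ Ioo (0 : ℝ) 1, h1 c = -1 := by
  obtain ⟨c, hc, h⟩ := exists_deriv_eq_slope hh (zero_lt_one)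
    hh_smooth.continuous.continuousOn
    (fun x _ => (hh_deriv x).differentiableAt.differentiableWithinAt)
  refine ⟨c, hc, ?_⟩
  rw [h1, h]
  simp [hh]
lemma h12_bound : ∃ K : ℝ, 1 ≤ K ∧ ∀ r, 0 ≤ r → |h1 r| ≤ K ∧ |h2 r| ≤ K ∧ |r * h1 r| ≤ K ∧
    |r * h2 r| ≤ K := by
  obtain ⟨a, ha⟩ := (isCompact_Icc (a := (0 : ℝ)) (b := 1)).exists_bound_of_continuousOn
    h1_smooth.continuous.continuousOn
  obtain ⟨b, hb⟩ := (isCompact_Icc (a := (0 : ℝ)) (b := 1)).exists_bound_of_continuousOn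
    h2_smooth.continuous.continuousOn
  refine ⟨max 1 (max a b), le_max_left _ _, fun r hr => ?_⟩
  have h0 : (0 : ℝ) ≤ max 1 (max a b) := zero_le_one.trans (le_max_left _ _)
  rcases le_or_gt r 1 with h | h
  · have e1 : |h1 r| ≤ max 1 (max a b) := (ha r ⟨hr, h⟩).trans (by simp)
    have e2 : |h2 r| ≤ max 1 (max a b) := (hb r ⟨hr, h⟩).trans (by simp)
    refine ⟨e1, e2, ?_, ?_⟩ <;> rw [abs_mul, abs_of_nonneg hr]
    · exact (mul_le_of_le_one_left (abs_nonneg _) h).trans e1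
    · exact (mul_le_of_le_one_left (abs_nonneg _) h).trans e2
  · rw [h1_zero h, h2_zero h]; simp

def ph (y : Eucl n) : ℝ := hh (‖y‖ ^ 2)
def uu (α : ℝ) : Eucl n → ℝ → ℝ :=
  fun x t => (1 - t) ^ α * ph ((Real.sqrt (1 - t))⁻¹ • x)

lemma uu_eq (α : ℝ) (x : Eucl n) {t : ℝ} (ht : t < 1) :
    uu α x t = (1 - t) ^ α * hh (‖x‖ ^ 2 / (1 - t)) := by
  have : 0 < 1 - t := by linarith
  rw [uu, ph, norm_smul, mul_pow, norm_inv, inv_pow, Real.norm_eq_abs, sq_abs, Real.sq_sqrt this.le]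
  congr 2; field_simp

/-- A -/
def AA (α t r : ℝ) : ℝ := 2 * (1 - t) ^ (α - 1) * h1 (r / (1 - t))
def AB (α t r : ℝ) : ℝ := 2 * (1 - t) ^ (α - 1) * (h2 (r / (1 - t)) / (1 - t))

lemma AA_deriv (α t r : ℝ) : HasDerivAt (AA α t) (AB α t r) r := by
  have := ((h1_deriv (r / (1 - t))).comp r ((hasDerivAt_id r).div_const (1 - t))).const_mul
    (2 * (1 - t) ^ (α - 1))
  refine HasDerivAt.congr_deriv (f := AA α t) this ?_
  simp only [AB]; ring

lemma nsq (x : Eucl n) : HasFDerivAt (fun y : Eucl n => ‖y‖ ^ 2) (2 • innerSL ℝ x) x :=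
  (hasStrictFDerivAt_norm_sq x).hasFDerivAt

lemma sgrad_uu (α : ℝ) (x : Eucl n) {t : ℝ} (ht : t < 1) :
    sgrad (uu α) x t = AA α t (‖x‖ ^ 2) • x := by
  have hs : 0 < 1 - t := by linarith
  rw [sgrad]
  apply HasGradientAt.gradient
  rw [hasGradientAt_iff_hasFDerivAt]
  have e : (fun y : Eucl n => uu α y t) = fun y => (1 - t) ^ α * hh (‖y‖ ^ 2 / (1 - t)) := by
    funext y; exact uu_eq α y ht
  rw [e]
  have d : HasDerivAt (fun r => (1 - t) ^ α * hh (r / (1 - t)))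
      ((1 - t) ^ α * (h1 (‖x‖ ^ 2 / (1 - t)) * (1 / (1 - t)))) (‖x‖ ^ 2) :=
    ((hh_deriv _).comp _ ((hasDerivAt_id _).div_const (1 - t))).const_mul _
  have d' := d.comp_hasFDerivAt x (nsq x)
  refine HasFDerivAt.congr_fderiv (f := fun y : Eucl n => (1 - t) ^ α * hh (‖y‖ ^ 2 / (1 - t)))
    d' ?_
  ext z
  simp [AA, inner_smul_left, Real.rpow_sub_one hs.ne']
  ring

lemma vel_uu (α : ℝ) (x : Eucl n) {t : ℝ} (ht : t < 1) :
    vel (uu α) x t = Real.sqrt (1 + AA α t (‖x‖ ^ 2) ^ 2 * ‖x‖ ^ 2) := by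
  rw [vel, sgrad_uu α x ht, norm_smul, mul_pow, Real.norm_eq_abs, sq_abs]

lemma divg_radial (W : ℝ → ℝ) (W' : ℝ) (x : Eucl n) (h : HasDerivAt W W' (‖x‖ ^ 2)) :
    divg (fun y => W (‖y‖ ^ 2) • y) x = n * W (‖x‖ ^ 2) + 2 * ‖x‖ ^ 2 * W' := by
  have key : ∀ i : Fin n, fderiv ℝ (fun y : Eucl n => (W (‖y‖ ^ 2) • y) i) x
      (EuclideanSpace.single i 1) = W (‖x‖ ^ 2) + 2 * W' * x i ^ 2 := by
    intro i
    have h2 : HasFDerivAt (fun y : Eucl n => y i) (EuclideanSpace.proj (𝕜 := ℝ) i) x :=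
      (EuclideanSpace.proj (𝕜 := ℝ) i).hasFDerivAt
    have e : (fun y : Eucl n => (W (‖y‖ ^ 2) • y) i) =
      (fun y : Eucl n => (W ∘ fun y : Eucl n => ‖y‖ ^ 2) y * y i) := by
      funext y; simp
    have := (h.comp_hasFDerivAt x (nsq x)).mul h2
    change HasFDerivAt (fun y : Eucl n => (W ∘ fun y : Eucl n => ‖y‖ ^ 2) y * y i) _ x at this
    rw [e, this.fderiv]
    simp [EuclideanSpace.inner_single_right]
    ring
  rw [divg, Finset.sum_congr rfl (fun i _ => key i), Finset.sum_add_distrib, ← Finset.mul_sum,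
    EuclideanSpace.norm_sq_eq]
  simp
  ring

lemma divg_uu (α : ℝ) (x : Eucl n) {t : ℝ} (ht : t < 1) :
    divg (fun y => (vel (uu α) y t)⁻¹ • sgrad (uu α) y t) x =
      (n * AA α t (‖x‖ ^ 2) + 2 * ‖x‖ ^ 2 * (AB α t (‖x‖ ^ 2) - AA α t (‖x‖ ^ 2) ^ 3 / 2) /
        (1 + AA α t (‖x‖ ^ 2) ^ 2 * ‖x‖ ^ 2)) / vel (uu α) x t := by
  have e : (fun y : Eucl n => (vel (uu α) y t)⁻¹ • sgrad (uu α) y t) =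
    fun y => (fun r => AA α t r / Real.sqrt (1 + AA α t r ^ 2 * r)) (‖y‖ ^ 2) • y := by
    funext y
    rw [vel_uu α y ht, sgrad_uu α y ht, smul_smul]
    congr 1; simp only; ring
  rw [e, vel_uu α x ht]
  set r := ‖x‖ ^ 2 with hr
  have hr0 : 0 ≤ r := by positivity
  have hp : 0 < 1 + AA α t r ^ 2 * r := by positivity
  have hd := AA_deriv α t r
  have := hd.div ((((hd.pow 2).mul (hasDerivAt_id r)).const_add 1).sqrt hp.ne')
    (Real.sqrt_pos.2 hp).ne'
  rw [divg_radial (fun r => AA α t r / Real.sqrt (1 + AA α t r ^ 2 * r)) _ x this]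
  rw [← hr]
  have hq := Real.sq_sqrt hp.le
  have hq0 := Real.sqrt_pos.2 hp
  simp only [Pi.pow_apply, Pi.mul_apply, id]
  set S := Real.sqrt (1 + AA α t r ^ 2 * r)
  simp only [← hq]
  have : AA α t r ^ 2 * r = S ^ 2 - 1 := by linarith
  field_simp
  simp
  left
  linear_combination (-2 * AB α t r) * this

lemma uu_time (α : ℝ) (x : Eucl n) {t : ℝ} (ht : t < 1) :
    HasDerivAt (uu α x) ((1 - t) ^ (α - 1) *
      (-α * hh (‖x‖ ^ 2 / (1 - t)) + ‖x‖ ^ 2 / (1 - t) * h1 (‖x‖ ^ 2 / (1 - t)))) t := by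
  have hs : 0 < 1 - t := by linarith
  have e : (uu α x) =ᶠ[𝓝 t] fun t => (1 - t) ^ α * hh (‖x‖ ^ 2 / (1 - t)) := by
    filter_upwards [gt_mem_nhds ht] with t' h' using uu_eq α x h'
  refine HasDerivAt.congr_of_eventuallyEq ?_ e
  have d0 : HasDerivAt (fun t : ℝ => 1 - t) (-1) t := by
    simpa using (hasDerivAt_id t).const_sub 1
  have d1 := d0.rpow_const (p := α) (Or.inl hs.ne')
  have d2 := (hh_deriv (‖x‖ ^ 2 / (1 - t))).comp t ((hasDerivAt_const t (‖x‖ ^ 2)).div d0 hs.ne')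
  refine HasDerivAt.congr_deriv (f := fun t => (1 - t) ^ α * hh (‖x‖ ^ 2 / (1 - t))) (d1.mul d2) ?_
  simp only [Function.comp, Real.rpow_sub_one hs.ne']
  simp
  field_simp
  try ring

def FF (α : ℝ) (x : Eucl n) (t : ℝ) : ℝ :=
  (1 - t) ^ (α - 1) *
      (-α * hh (‖x‖ ^ 2 / (1 - t)) + ‖x‖ ^ 2 / (1 - t) * h1 (‖x‖ ^ 2 / (1 - t))) -
  (n * AA α t (‖x‖ ^ 2) + 2 * ‖x‖ ^ 2 * (AB α t (‖x‖ ^ 2) - AA α t (‖x‖ ^ 2) ^ 3 / 2) /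
        (1 + AA α t (‖x‖ ^ 2) ^ 2 * ‖x‖ ^ 2))

def ff (α : ℝ) : Eucl n → ℝ → ℝ → Eucl (n + 1) :=
  fun x _ t => FF α x t • EuclideanSpace.single (Fin.last n) 1

lemma ff_norm (α : ℝ) (x : Eucl n) (z t : ℝ) : ‖ff α x z t‖ = |FF α x t| := by
  simp [ff, norm_smul]

lemma fdotn_ff (α : ℝ) (u : Eucl n → ℝ → ℝ) (x : Eucl n) (t : ℝ) :
    fdotn (ff α) u x t = FF α x t / vel u x t := by
  rw [fdotn, ff, inner_smul_left, EuclideanSpace.inner_single_left]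
  simp [unormal]
  ring

lemma uu_pde (α : ℝ) (x : Eucl n) {t : ℝ} (ht : t < 1) :
    deriv (uu α x) t / vel (uu α) x t
      = divg (fun y => (vel (uu α) y t)⁻¹ • sgrad (uu α) y t) x + fdotn (ff α) (uu α) x t := by
  rw [divg_uu α x ht, fdotn_ff, (uu_time α x ht).deriv, FF]
  ring

lemma FF_smooth (α : ℝ) : ContDiffOn ℝ ∞ (fun P : (Eucl n × ℝ) × ℝ => FF α P.1.1 P.2)
    (univ ×ˢ Ico (0 : ℝ) 1) := by
  have hs : ∀ P ∈ (univ ×ˢ Ico (0 : ℝ) 1 : Set ((Eucl n × ℝ) × ℝ)), 1 - P.2 ≠ 0 := by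
    rintro P ⟨_, h⟩; have := h.2; linarith
  have c0 : ContDiffOn ℝ ∞ (fun P : (Eucl n × ℝ) × ℝ => 1 - P.2) (univ ×ˢ Ico (0 : ℝ) 1) :=
    (contDiff_const.sub contDiff_snd).contDiffOn
  have c1 : ContDiffOn ℝ ∞ (fun P : (Eucl n × ℝ) × ℝ => ‖P.1.1‖ ^ 2) (univ ×ˢ Ico (0 : ℝ) 1) :=
    (contDiff_fst.fst.norm_sq ℝ).contDiffOn
  have c2 := c1.div c0 hs
  have c3 := c0.rpow_const_of_ne (p := α - 1) hs
  have d0 := hh_smooth.comp_contDiffOn c2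
  have d1 := h1_smooth.comp_contDiffOn c2
  have d2 := h2_smooth.comp_contDiffOn c2
  have a : ContDiffOn ℝ ∞ (fun P : (Eucl n × ℝ) × ℝ => AA α P.2 (‖P.1.1‖ ^ 2))
    (univ ×ˢ Ico (0 : ℝ) 1) := (contDiffOn_const.mul c3).mul d1
  have b : ContDiffOn ℝ ∞ (fun P : (Eucl n × ℝ) × ℝ => AB α P.2 (‖P.1.1‖ ^ 2))
    (univ ×ˢ Ico (0 : ℝ) 1) := (contDiffOn_const.mul c3).mul (d2.div c0 hs)
  refine (c3.mul ((contDiffOn_const.mul d0).add (c2.mul d1))).sub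
    ((contDiffOn_const.mul a).add (((contDiffOn_const.mul c1).mul
      (b.sub ((a.pow 3).div_const 2))).div (contDiffOn_const.add ((a.pow 2).mul c1)) ?_))
  intro P _
  positivity

lemma ff_smooth (α : ℝ) : ContDiffOn ℝ ∞
    (fun P : (Eucl n × ℝ) × ℝ => ff α P.1.1 P.1.2 P.2) (univ ×ˢ Ico (0 : ℝ) 1) :=
  (FF_smooth α).smul contDiffOn_const

lemma FF_zero (α : ℝ) (x : Eucl n) {t : ℝ} (ht : t < 1) (hx : 1 - t < ‖x‖ ^ 2) :
    FF α x t = 0 := by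
  have hs : 0 < 1 - t := by linarith
  have : 1 < ‖x‖ ^ 2 / (1 - t) := by rwa [one_lt_div hs]
  simp [FF, AA, AB, h1_zero this, h2_zero this, hh_zero this.le]

lemma FF_bound (n : ℕ) : ∃ C : ℝ, 0 < C ∧ ∀ α ∈ Ioo (0 : ℝ) (1 / 2), ∀ (x : Eucl n), ∀ t < 1,
    |FF α x t| ≤ C * (1 - t) ^ (α - 1) := by
  obtain ⟨K, hK, hb⟩ := h12_bound
  refine ⟨1 + K + (n * (2 * K) + (4 * K + 2 * K)), by positivity, fun α hα x t ht => ?_⟩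
  have hs : 0 < 1 - t := by linarith
  obtain ⟨b1, b2, b3, b4⟩ := hb (‖x‖ ^ 2 / (1 - t)) (by positivity)
  have b0 := hh_abs (‖x‖ ^ 2 / (1 - t))
  have hσ : 0 < (1 - t) ^ (α - 1) := Real.rpow_pos_of_pos hs _
  have hA : |AA α t (‖x‖ ^ 2)| ≤ 2 * K * (1 - t) ^ (α - 1) := by
    rw [AA, abs_mul, abs_of_pos (by positivity)]
    nlinarith
  have hB : |‖x‖ ^ 2 * AB α t (‖x‖ ^ 2)| ≤ 2 * K * (1 - t) ^ (α - 1) := by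
    have : ‖x‖ ^ 2 * AB α t (‖x‖ ^ 2) =
      (2 * (1 - t) ^ (α - 1)) * (‖x‖ ^ 2 / (1 - t) * h2 (‖x‖ ^ 2 / (1 - t))) := by
      rw [AB]; ring
    rw [this, abs_mul, abs_of_pos (by positivity)]
    nlinarith
  have hr : 0 ≤ ‖x‖ ^ 2 := by positivity
  rw [FF]
  generalize (1 - t) ^ (α - 1) = σ at *
  generalize AA α t (‖x‖ ^ 2) = A at *
  generalize AB α t (‖x‖ ^ 2) = B at *
  generalize ‖x‖ ^ 2 = r at *
  generalize r / (1 - t) = ρ at *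
  have hD : 1 ≤ 1 + A ^ 2 * r := by have : 0 ≤ A ^ 2 * r := by positivity
                                    linarith
  have e : 2 * r * (B - A ^ 3 / 2) / (1 + A ^ 2 * r) =
    2 * ((r * B) / (1 + A ^ 2 * r)) - A * (A ^ 2 * r / (1 + A ^ 2 * r)) := by ring
  have t1 : |(r * B) / (1 + A ^ 2 * r)| ≤ 2 * K * σ := by
    rw [abs_div, abs_of_pos (by linarith : 0 < 1 + A ^ 2 * r)]
    exact (div_le_self (abs_nonneg _) hD).trans hB
  have t2 : |A * (A ^ 2 * r / (1 + A ^ 2 * r))| ≤ 2 * K * σ := by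
    rw [abs_mul, abs_of_nonneg (by positivity : 0 ≤ A ^ 2 * r / (1 + A ^ 2 * r))]
    refine (mul_le_of_le_one_right (abs_nonneg _) ?_).trans hA
    rw [div_le_one (by linarith)]; linarith
  have t3 : |σ * (-α * hh ρ + ρ * h1 ρ)| ≤ (1 + K) * σ := by
    rw [abs_mul, abs_of_pos hσ, mul_comm]
    refine mul_le_mul_of_nonneg_right ?_ hσ.le
    refine (abs_add_le _ _).trans (add_le_add ?_ b3)
    rw [abs_mul, abs_neg, abs_of_pos hα.1]
    nlinarith [hα.1, hα.2, abs_nonneg (hh ρ)]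
  have t4 : |n * A| ≤ n * (2 * K) * σ := by
    rw [abs_mul, Nat.abs_cast, mul_assoc]
    exact mul_le_mul_of_nonneg_left hA (by positivity)
  rw [e]
  rw [abs_le] at *
  constructor <;> linarith [t1.1, t1.2, t2.1, t2.2, t3.1, t3.2, t4.1, t4.2]

lemma vel_bound (n : ℕ) : ∃ C : ℝ, 0 < C ∧ ∀ α ∈ Ioo (0 : ℝ) (1 / 2), ∀ (x : Eucl n),
    ∀ t ∈ Ioo (0 : ℝ) 1, vel (uu α) x t ≤ C * (1 - t) ^ (α - 1 / 2) := by
  obtain ⟨K, hK, hb⟩ := h12_bound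
  refine ⟨1 + 2 * K, by positivity, fun α hα x t ht => ?_⟩
  have hs : 0 < 1 - t := by linarith [ht.2]
  obtain ⟨b1, b2, b3, b4⟩ := hb (‖x‖ ^ 2 / (1 - t)) (by positivity)
  rw [vel_uu α x ht.2]
  set σ := (1 - t) ^ (α - 1 / 2) with hσ
  have hσ1 : 1 ≤ σ := Real.one_le_rpow_of_pos_of_le_one_of_nonpos hs (by linarith [ht.1])
    (by linarith [hα.2])
  have hsq : ((1 - t) ^ (α - 1)) ^ 2 * (1 - t) = σ ^ 2 := by
    rw [hσ, ← Real.rpow_natCast, ← Real.rpow_natCast, ← Real.rpow_mul hs.le, ← Real.rpow_mul hs.le,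
      ← Real.rpow_add_one hs.ne']
    congr 1; push_cast; ring
  have : AA α t (‖x‖ ^ 2) ^ 2 * ‖x‖ ^ 2 = 4 * σ ^ 2 *
      (h1 (‖x‖ ^ 2 / (1 - t)) * (‖x‖ ^ 2 / (1 - t) * h1 (‖x‖ ^ 2 / (1 - t)))) := by
    rw [← hsq, AA]; field_simp; ring
  rw [this]
  have h3 : h1 (‖x‖ ^ 2 / (1 - t)) * (‖x‖ ^ 2 / (1 - t) * h1 (‖x‖ ^ 2 / (1 - t))) ≤ K * K := by
    refine (le_abs_self _).trans ?_
    rw [abs_mul]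
    exact mul_le_mul b1 b3 (abs_nonneg _) (by linarith)
  apply Real.sqrt_le_iff.2
  constructor
  · positivity
  · have : 4 * σ ^ 2 * (h1 (‖x‖ ^ 2 / (1 - t)) * (‖x‖ ^ 2 / (1 - t) * h1 (‖x‖ ^ 2 / (1 - t)))) ≤
      4 * σ ^ 2 * (K * K) := mul_le_mul_of_nonneg_left h3 (by positivity)
    have h5 : 1 ≤ σ ^ 2 := one_le_pow₀ hσ1
    have h6 : 0 ≤ K * σ ^ 2 := by positivity
    nlinarith

lemma uu_unbounded (hn : 1 ≤ n) (α : ℝ) (hα : α ∈ Ioo (0 : ℝ) (1 / 2)) :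
    ¬∃ M : ℝ, ∀ x ∈ ball (0 : Eucl n) 2, ∀ t ∈ Ioo (0 : ℝ) 1, ‖sgrad (uu α) x t‖ ≤ M := by
  rintro ⟨M, hM⟩
  obtain ⟨c, hc, h1c⟩ := h1_neg
  have hlim : Tendsto (fun s : ℝ => s ^ (α - 1 / 2)) (𝓝[>] 0) atTop :=
    tendsto_rpow_neg_nhdsGT_zero (by linarith [hα.2])
  have hc0 : 0 < Real.sqrt c := Real.sqrt_pos.2 hc.1
  have ev := (hlim.eventually_gt_atTop (M / (2 * Real.sqrt c))).and
    (Ioo_mem_nhdsGT (zero_lt_one' ℝ))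
  obtain ⟨s, hs, hs0, hs1⟩ := ev.exists
  have hcs : 0 < c * s := mul_pos hc.1 hs0
  set x : Eucl n := EuclideanSpace.single ⟨0, hn⟩ (Real.sqrt (c * s)) with hx
  have hxn : ‖x‖ = Real.sqrt (c * s) := by
    rw [hx, PiLp.norm_single, Real.norm_eq_abs, abs_of_nonneg (Real.sqrt_nonneg _)]
  have hcs1 : c * s < 1 := by nlinarith [hc.2, hc.1]
  have := hM x (by
    rw [mem_ball_zero_iff, hxn, Real.sqrt_lt' (by norm_num)]; linarith) (1 - s)
    ⟨by linarith, by linarith⟩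
  rw [sgrad_uu α x (by linarith), norm_smul, hxn, Real.sq_sqrt hcs.le, AA] at this
  simp only [sub_sub_cancel] at this
  rw [mul_div_cancel_right₀ _ hs0.ne', h1c, Real.sqrt_mul hc.1.le, Real.sqrt_eq_rpow s,
    Real.norm_eq_abs, mul_neg_one, abs_neg, abs_of_pos (by positivity)] at this
  have e : s ^ (α - 1 / 2) = s ^ (α - 1) * s ^ (1 / 2 : ℝ) := by
    rw [← Real.rpow_add hs0]; congr 1; ring
  rw [div_lt_iff₀ (by positivity), e] at hs
  nlinarith

lemma sdist_ball (y : Eucl n) (hy : y ≠ 0) :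
    sdist (ball (0 : Eucl n) 2) y = ‖y‖ - 2 := by
  have hy0 : 0 < ‖y‖ := norm_pos_iff.2 hy
  have hp : ∀ c : ℝ, 0 ≤ c → ‖(c / ‖y‖) • y‖ = c := by
    intro c hc
    rw [norm_smul, norm_div, norm_norm, Real.norm_eq_abs, abs_of_nonneg hc]; field_simp
  have hd : ∀ c : ℝ, dist y ((c / ‖y‖) • y) = |‖y‖ - c| := by
    intro c
    have : y - (c / ‖y‖) • y = (1 - c / ‖y‖) • y := by rw [sub_smul, one_smul]
    rw [dist_eq_norm, this, norm_smul, Real.norm_eq_abs, ← abs_of_pos hy0, ← abs_mul, abs_of_pos hy0]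
    congr 1; field_simp
  have hne : (ball (0 : Eucl n) 2).Nonempty := ⟨0, by simp⟩
  have hm : (2 / ‖y‖) • y ∈ (ball (0 : Eucl n) 2)ᶜ := by
    rw [mem_compl_iff, mem_ball_zero_iff, hp 2 (by norm_num)]; norm_num
  rw [sdist]
  rcases lt_or_ge ‖y‖ 2 with h | h
  · rw [infDist_zero_of_mem (by simpa using h)]
    have : infDist y (ball (0 : Eucl n) 2)ᶜ = 2 - ‖y‖ := by
      apply le_antisymm
      · refine (infDist_le_dist_of_mem hm).trans ?_
        rw [hd, abs_of_neg (by linarith)]; linarith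
      · rw [le_infDist ⟨_, hm⟩]
        intro z hz
        rw [mem_compl_iff, mem_ball_zero_iff, not_lt] at hz
        rw [dist_comm, dist_eq_norm]
        linarith [norm_sub_norm_le z y]
    linarith
  · rw [infDist_zero_of_mem (s := (ball (0 : Eucl n) 2)ᶜ) (by simpa using h)]
    have : infDist y (ball (0 : Eucl n) 2) = ‖y‖ - 2 := by
      rw [← infDist_closure, closure_ball _ (by norm_num)]
      apply le_antisymm
      · refine (infDist_le_dist_of_mem (y := (2 / ‖y‖) • y) ?_).trans ?_
        · rw [mem_closedBall_zero_iff, hp 2 (by norm_num)]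
        · rw [hd, abs_of_nonneg (by linarith)]
      · rw [le_infDist ⟨0, by simp⟩]
        intro z hz
        rw [mem_closedBall_zero_iff] at hz
        rw [dist_eq_norm]
        linarith [norm_sub_norm_le y z]
    linarith

lemma smooth_ball (hn : 1 ≤ n) : SmoothBoundary (ball (0 : Eucl n) 2) := by
  refine ⟨{0}ᶜ, isOpen_compl_singleton, ?_, ?_⟩
  · rw [frontier_ball _ (by norm_num)]
    intro x hx h
    rw [mem_singleton_iff] at h
    simp [h] at hx
  · have : ContDiffOn ℝ ∞ (fun y : Eucl n => ‖y‖ - 2) {0}ᶜ :=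
      fun y hy => ((contDiffAt_id.norm ℝ hy).sub contDiffAt_const).contDiffWithinAt
    exact this.congr fun y hy => sdist_ball y hy

lemma ph_smooth : ContDiff ℝ ∞ (ph : Eucl n → ℝ) := hh_smooth.comp (contDiff_id.norm_sq ℝ)

lemma ph_supp : tsupport (ph : Eucl n → ℝ) ⊆ closedBall 0 1 := by
  apply closure_minimal _ isClosed_closedBall
  intro x hx
  rw [mem_closedBall_zero_iff]
  by_contra h
  push Not at h
  exact hx (hh_zero (one_le_pow₀ h.le))

lemma uu_cont (α : ℝ) (hα : 0 < α) :
    ContinuousOn (fun p : Eucl n × ℝ => uu α p.1 p.2)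
      (closure (ball (0 : Eucl n) 2) ×ˢ Icc 0 1) := by
  rintro ⟨x, t⟩ ⟨_, ht⟩
  have hc : Continuous (fun p : Eucl n × ℝ => (1 - p.2) ^ α) :=
    (continuous_const.sub continuous_snd).rpow_const (fun _ => Or.inr hα.le)
  rcases eq_or_lt_of_le ht.2 with h | h
  · simp only at h
    subst h
    apply ContinuousAt.continuousWithinAt
    have h0 : uu α x 1 = 0 := by simp [uu, hα.ne']
    rw [ContinuousAt]
    simp only [h0]
    have hl : Tendsto (fun p : Eucl n × ℝ => |(1 - p.2) ^ α|) (𝓝 (x, 1)) (𝓝 0) := by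
      have := hc.abs.tendsto (x, 1)
      simpa [hα.ne'] using this
    refine squeeze_zero_norm (fun p => ?_) hl
    rw [uu, norm_mul, Real.norm_eq_abs, Real.norm_eq_abs]
    exact mul_le_of_le_one_right (abs_nonneg _) (hh_abs _)
  · apply ContinuousAt.continuousWithinAt
    have hs : 0 < 1 - t := by simp only at h; linarith
    refine hc.continuousAt.mul (ph_smooth.continuous.continuousAt.comp ?_)
    have h1 : ContinuousAt (fun p : Eucl n × ℝ => Real.sqrt (1 - p.2)) (x, t) := by fun_prop
    exact (h1.inv₀ (Real.sqrt_pos.2 hs).ne').smul continuousAt_fst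

lemma uu_sol (α : ℝ) (hα : 0 < α) :
    IsMCFSolution (ball (0 : Eucl n) 2) (ff α) (fun x => uu α x 0) (uu α) 1 where
  reg_x t ht := by
    apply ContDiff.contDiffOn
    exact contDiff_const.mul ((ph_smooth.of_le (by norm_cast)).comp
      (contDiff_const_smul _))
  reg_t x _ t ht := (uu_time α x ht.2).differentiableAt
  cont := uu_cont α hα
  grad_cont t ht := by
    apply Continuous.continuousOn
    have : (fun x : Eucl n => sgrad (uu α) x t) = fun x => AA α t (‖x‖ ^ 2) • x := by
      funext x; exact sgrad_uu α x ht.2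
    rw [this]
    have h : Continuous (AA α t) := continuous_iff_continuousAt.2
      fun r => (AA_deriv α t r).continuousAt
    exact (h.comp (continuous_norm.pow 2)).smul continuous_id
  pde x _ t ht := uu_pde α x ht.2
  neumann t ht x hx := by
    rw [frontier_ball _ (by norm_num), mem_sphere_zero_iff_norm] at hx
    have : 1 < ‖x‖ ^ 2 / (1 - t) := by
      rw [one_lt_div (by linarith [ht.2]), hx]; linarith [ht.1]
    rw [sgrad_uu α x ht.2, AA, h1_zero this]
    simp
  init x _ := rfl

lemma norm_fin (n : ℕ) (p q α : ℝ) (hp : 1 ≤ p) (hq : 1 ≤ q) (hα : α ∈ Ioo (0 : ℝ) (1 / 2))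
    (h : 0 < (α - 1) + n / (2 * p) + 1 / q + (α - 1 / 2) / p) :
    mixedNormE (ball (0 : Eucl n) 2) (ff α) (uu α) p q 0 1 ≠ ⊤ := by
  obtain ⟨C, hC, hF⟩ := FF_bound n
  obtain ⟨V, hV, hv⟩ := vel_bound n
  have hp0 : 0 < p := by linarith
  have hq0 : 0 < q := by linarith
  set w : ℝ := (volume (ball (0 : Eucl n) 1)).toReal with hw
  have hw' : volume (ball (0 : Eucl n) 1) = ENNReal.ofReal w :=
    (ENNReal.ofReal_toReal measure_ball_lt_top.ne).symm
  have hw0 : 0 ≤ w := ENNReal.toReal_nonneg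
  set γ : ℝ := (α - 1) * p + (α - 1 / 2) + n / 2 with hγ
  have inner : ∀ t ∈ Ioo (0 : ℝ) 1,
      (∫⁻ x in ball (0 : Eucl n) 2, (‖ff α x (uu α x t) t‖₊ : ℝ≥0∞) ^ p *
        ENNReal.ofReal (vel (uu α) x t)) ^ (q / p)
      ≤ ENNReal.ofReal ((C ^ p * V * w) ^ (q / p) * (1 - t) ^ (γ * (q / p))) := by
    intro t ht
    have hs : 0 < 1 - t := by linarith [ht.2]
    have hi : ∫⁻ x in ball (0 : Eucl n) 2, (‖ff α x (uu α x t) t‖₊ : ℝ≥0∞) ^ p *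
        ENNReal.ofReal (vel (uu α) x t) ≤ ENNReal.ofReal (C ^ p * V * w * (1 - t) ^ γ) := by
      calc _ ≤ ∫⁻ x, (‖ff α x (uu α x t) t‖₊ : ℝ≥0∞) ^ p *
                ENNReal.ofReal (vel (uu α) x t) := setLIntegral_le_lintegral _ _
        _ ≤ ∫⁻ x, (closedBall (0 : Eucl n) (Real.sqrt (1 - t))).indicator (fun _ =>
              ENNReal.ofReal ((C * (1 - t) ^ (α - 1)) ^ p * (V * (1 - t) ^ (α - 1 / 2)))) x := by
            apply lintegral_mono
            intro x
            have e : (‖ff α x (uu α x t) t‖₊ : ℝ≥0∞) = ENNReal.ofReal |FF α x t| := by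
              rw [← ff_norm α x (uu α x t) t, ofReal_norm_eq_enorm]; rfl
            simp only [e]
            by_cases hx : x ∈ closedBall (0 : Eucl n) (Real.sqrt (1 - t))
            · rw [indicator_of_mem hx, ENNReal.ofReal_rpow_of_nonneg (abs_nonneg _) hp0.le,
                ← ENNReal.ofReal_mul (by positivity)]
              apply ENNReal.ofReal_le_ofReal
              have := hF α hα x t ht.2
              exact mul_le_mul (Real.rpow_le_rpow (abs_nonneg _) this hp0.le) (hv α hα x t ht)
                (vel_pos _ _ _).le (by positivity)
            · rw [mem_closedBall_zero_iff, not_le, Real.sqrt_lt hs.le (norm_nonneg _)] at hx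
              rw [FF_zero α x ht.2 hx]
              simp [hp0]
        _ = ENNReal.ofReal ((C * (1 - t) ^ (α - 1)) ^ p * (V * (1 - t) ^ (α - 1 / 2))) *
              volume (closedBall (0 : Eucl n) (Real.sqrt (1 - t))) :=
            lintegral_indicator_const measurableSet_closedBall _
        _ = ENNReal.ofReal (C ^ p * V * w * (1 - t) ^ γ) := by
            rw [Measure.addHaar_closedBall _ _ (Real.sqrt_nonneg _), hw',
              ← ENNReal.ofReal_mul (by positivity), ← ENNReal.ofReal_mul (by positivity)]
            congr 1
            rw [finrank_euclideanSpace_fin, hγ, Real.rpow_add hs, Real.rpow_add hs,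
              Real.mul_rpow hC.le (by positivity), ← Real.rpow_mul hs.le, Real.sqrt_eq_rpow,
              ← Real.rpow_natCast, ← Real.rpow_mul hs.le]
            have : (1 / 2 : ℝ) * n = n / 2 := by ring
            rw [this]; ring
    calc _ ≤ (ENNReal.ofReal (C ^ p * V * w * (1 - t) ^ γ)) ^ (q / p) :=
          ENNReal.rpow_le_rpow hi (by positivity)
      _ = _ := by
        rw [ENNReal.ofReal_rpow_of_nonneg (by positivity) (by positivity),
          Real.mul_rpow (by positivity) (by positivity), ← Real.rpow_mul hs.le]
  rw [mixedNormE]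
  apply ENNReal.rpow_ne_top_of_nonneg (by positivity)
  refine ne_top_of_le_ne_top ?_ (setLIntegral_mono' measurableSet_Ioo inner)
  have hβ : -1 < γ * (q / p) := by
    have : γ * (q / p) + 1 = q * ((α - 1) + n / (2 * p) + 1 / q + (α - 1 / 2) / p) := by
      rw [hγ]; field_simp; ring
    have h2 := mul_pos hq0 h
    linarith
  have hint : IntervalIntegrable (fun t : ℝ => (1 - t) ^ (γ * (q / p))) volume 0 1 := by
    have := (intervalIntegral.intervalIntegrable_rpow' (a := 0) (b := 1) hβ).comp_sub_left 1
    simpa using this.symm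
  rw [intervalIntegrable_iff_integrableOn_Ioo_of_le zero_le_one] at hint
  exact (Integrable.lintegral_lt_top (hint.const_mul _)).ne

/-- optimality of the integrability condition on the transport
term: if `n/p + 2/q > 1` there is a solution with finite mixed norm of the
transport term whose gradient blows up. -/
theorem optimality_of_transport_condition
    (n : ℕ) (hn : 1 ≤ n) (p q : ℝ) (hp : 1 ≤ p) (hq : 1 ≤ q)
    (hpq : (n : ℝ) / p + 2 / q > 1) :
    ∃ (Ω : Set (Eucl n)) (f : Eucl n → ℝ → ℝ → Eucl (n + 1))
      (u : Eucl n → ℝ → ℝ) (φ : Eucl n → ℝ) (α : ℝ),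
      IsOpen Ω ∧ Bornology.IsBounded Ω ∧ Convex ℝ Ω ∧ SmoothBoundary Ω ∧
      -- `f⃗` is a smooth transport term on `Ω × ℝ × [0,1)`
      ContDiffOn ℝ ∞ (fun P : (Eucl n × ℝ) × ℝ => f P.1.1 P.1.2 P.2)
        (univ ×ˢ Ico (0 : ℝ) 1) ∧
      -- `u` is the self-similar ansatz `(1−t)^α φ(x/√(1−t))` with `φ ∈ C_c^∞(Ω)`
      ContDiff ℝ ∞ φ ∧ HasCompactSupport φ ∧ tsupport φ ⊆ Ω ∧ α < 1 / 2 ∧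
      u = (fun x t => (1 - t) ^ α * φ ((Real.sqrt (1 - t))⁻¹ • x)) ∧
      -- `u` is a classical solution on `Ω × (0,1)` with Neumann boundary condition
      IsMCFSolution Ω f (fun x => u x 0) u 1 ∧
      -- `‖f⃗‖_{L^q_t L^p_x(0,1,Γ_t)} < ∞`
      mixedNormE Ω f u p q 0 1 ≠ ⊤ ∧
      -- but the gradient of the solution is unbounded
      ¬∃ M : ℝ, ∀ x ∈ Ω, ∀ t ∈ Ioo (0 : ℝ) 1, ‖sgrad u x t‖ ≤ M := by
  have hp0 : 0 < p := by linarith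
  have hq0 : 0 < q := by linarith
  set ε : ℝ := n / (2 * p) + 1 / q - 1 / 2 with hε
  have hε0 : 0 < ε := by
    have : ε = (n / p + 2 / q - 1) / 2 := by rw [hε]; field_simp
    rw [this]; linarith
  set δ : ℝ := min (1 / 4) (ε / 4) with hδ
  have hδ0 : 0 < δ := lt_min (by norm_num) (by linarith)
  have hδ1 : δ ≤ 1 / 4 := min_le_left _ _
  have hδ2 : δ ≤ ε / 4 := min_le_right _ _
  have hα : 1 / 2 - δ ∈ Ioo (0 : ℝ) (1 / 2) := ⟨by linarith, by linarith⟩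
  refine ⟨ball 0 2, ff (1 / 2 - δ), uu (1 / 2 - δ), ph, 1 / 2 - δ, isOpen_ball, isBounded_ball,
    convex_ball _ _, smooth_ball hn, ff_smooth _, ph_smooth,
    HasCompactSupport.intro' (isCompact_closedBall 0 1) isClosed_closedBall
      (fun x hx => by_contra fun h => hx (ph_supp (subset_tsupport _ h))),
    ph_supp.trans (closedBall_subset_ball (by norm_num)), hα.2, rfl, uu_sol _ hα.1,
    norm_fin n p q _ hp hq hα ?_, uu_unbounded hn _ hα⟩
  have h3 : δ / p ≤ δ := div_le_self hδ0.le hp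
  have h4 : (1 / 2 - δ - 1 / 2) / p = -(δ / p) := by ring
  rw [h4]
  linarith

end
end
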